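/- arXiv:2006.11088 — 9 statements merged into one kernel-verified Lean document; each statement's English description precedes it below -/
import Mathlib

section
/- A mapping 𝒱 : [0,1] → [0,1] is a v-transform if and only if there exists δ ∈ (0,1) and a continuous strictly increasing distribution function Ψ on [0,1] (i.e., Ψ : [0,1] → [0,1] continuous, strictly increasing, with Ψ(0) = 0 and Ψ(1) = 1) such that 𝒱(u) = (1−u) − (1−δ)·Ψ(u/δ) for u ≤ δ, and 𝒱(u) = u − δ·Ψ⁻¹((1−u)/(1−δ)) for u > δ. -/
open Set MeasureTheory ProbabilityTheory

/-- A v-transform with fulcrum `δ`: a mapping of `[0,1]` to `[0,1]` with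
`𝒱 0 = 𝒱 1 = 1`, `𝒱 δ = 0`, continuous, strictly decreasing on `[0,δ]`,
strictly increasing on `[δ,1]`, and satisfying the square property. -/
structure IsVTransform (V : ℝ → ℝ) (δ : ℝ) : Prop where
  mapsTo : ∀ u ∈ Set.Icc (0:ℝ) 1, V u ∈ Set.Icc (0:ℝ) 1
  fulcrum_mem : δ ∈ Set.Ioo (0:ℝ) 1
  map_zero : V 0 = 1
  map_one : V 1 = 1
  map_fulcrum : V δ = 0
  contOn : ContinuousOn V (Set.Icc 0 1)
  strictAntiOn : StrictAntiOn V (Set.Icc 0 δ)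
  strictMonoOn : StrictMonoOn V (Set.Icc δ 1)
  square : ∀ u ∈ Set.Icc (0:ℝ) 1, u ≠ δ →
    ∃ us ∈ Set.Icc (0:ℝ) 1, ((u < δ ∧ δ < us) ∨ (us < δ ∧ δ < u)) ∧
      V us = V u ∧ |us - u| = V u

/-- The partial inverse `𝒱⁻¹(v) = inf {u ∈ [0,1] : 𝒱(u) = v}` of a v-transform,
taking values in `[0,δ]` (the decreasing branch). -/
noncomputable def partialInverse (V : ℝ → ℝ) (v : ℝ) : ℝ :=
  sInf {u | u ∈ Set.Icc (0:ℝ) 1 ∧ V u = v}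

/-- The conditional down probability `Δ(v) = -1 / 𝒱′(𝒱⁻¹(v))`, where the derivative
is taken within `[0,δ]` (so that at the fulcrum it is the left derivative, following
the convention of the paper). -/
noncomputable def downProb (V : ℝ → ℝ) (δ : ℝ) (v : ℝ) : ℝ :=
  -1 / derivWithin V (Set.Icc 0 δ) (partialInverse V v)

/-- The stochastic inversion function `𝒱⁻¹(v,w)` of a v-transform. -/
noncomputable def stochInv (V : ℝ → ℝ) (δ : ℝ) (v w : ℝ) : ℝ :=
  if w ≤ downProb V δ v then partialInverse V v else v + partialInverse V v

/-- Theorem 1 of the paper: a mapping `𝒱 : [0,1] → [0,1]` is a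
v-transform if and only if it takes the form (2) for some fulcrum `δ ∈ (0,1)` and
some continuous strictly increasing distribution function `Ψ` on `[0,1]`. -/
theorem vtransform_characterization (V : ℝ → ℝ)
    (hV01 : ∀ u ∈ Set.Icc (0:ℝ) 1, V u ∈ Set.Icc (0:ℝ) 1) :
    (∃ δ : ℝ, IsVTransform V δ) ↔
      (∃ δ ∈ Set.Ioo (0:ℝ) 1, ∃ Ψ Ψinv : ℝ → ℝ,
        ContinuousOn Ψ (Set.Icc 0 1) ∧ StrictMonoOn Ψ (Set.Icc 0 1) ∧
        Ψ 0 = 0 ∧ Ψ 1 = 1 ∧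
        (∀ x ∈ Set.Icc (0:ℝ) 1, Ψ x ∈ Set.Icc (0:ℝ) 1) ∧
        (∀ x ∈ Set.Icc (0:ℝ) 1, Ψinv (Ψ x) = x) ∧
        (∀ x ∈ Set.Icc (0:ℝ) 1, Ψ (Ψinv x) = x) ∧
        (∀ u ∈ Set.Icc (0:ℝ) 1, u ≤ δ → V u = (1 - u) - (1 - δ) * Ψ (u / δ)) ∧
        (∀ u ∈ Set.Icc (0:ℝ) 1, δ < u → V u = u - δ * Ψinv ((1 - u) / (1 - δ)))) := by
  constructor
  · rintro ⟨δ, h⟩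
    obtain ⟨hd0, hd1⟩ := h.fulcrum_mem
    have h1d : 0 < 1 - δ := by linarith
    -- the dual of a point left of the fulcrum
    have hdual : ∀ u ∈ Icc (0:ℝ) δ, u + V u ∈ Icc δ 1 ∧ V (u + V u) = V u := by
      intro u hu
      rcases eq_or_lt_of_le hu.2 with he | hlt
      · subst he
        rw [h.map_fulcrum, add_zero]
        exact ⟨⟨le_refl _, hd1.le⟩, h.map_fulcrum⟩
      · obtain ⟨us, hus, hc, hv, ha⟩ := h.square u ⟨hu.1, by linarith [hu.2]⟩ hlt.ne
        have hc1 : δ < us := by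
          rcases hc with hc | hc
          · exact hc.2
          · linarith [hc.2]
        rw [abs_of_pos (by linarith)] at ha
        have : u + V u = us := by linarith
        rw [this]
        exact ⟨⟨hc1.le, hus.2⟩, hv⟩
    have hanti : ∀ a ∈ Icc (0:ℝ) δ, ∀ b ∈ Icc (0:ℝ) δ, a < b → b + V b < a + V a := by
      intro a ha b hb hab
      have := h.strictAntiOn ha hb hab
      obtain ⟨ha1, ha2⟩ := hdual a ha
      obtain ⟨hb1, hb2⟩ := hdual b hb
      rw [← h.strictMonoOn.lt_iff_lt hb1 ha1, ha2, hb2]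
      exact this
    have hmul : ∀ x ∈ Icc (0:ℝ) 1, δ * x ∈ Icc (0:ℝ) δ := by
      intro x hx
      exact ⟨mul_nonneg hd0.le hx.1, by nlinarith [hx.2]⟩
    let Ψ : ℝ → ℝ := fun x => (1 - δ * x - V (δ * x)) / (1 - δ)
    have hΨc : ContinuousOn Ψ (Icc 0 1) := by
      have : ContinuousOn (fun x => V (δ * x)) (Icc 0 1) := by
        refine h.contOn.comp (by fun_prop) ?_
        intro x hx
        exact ⟨(hmul x hx).1, (hmul x hx).2.trans hd1.le⟩
      exact ContinuousOn.div_const (ContinuousOn.sub (by fun_prop) this) _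
    have hΨm : StrictMonoOn Ψ (Icc 0 1) := by
      intro a ha b hb hab
      have := hanti _ (hmul a ha) _ (hmul b hb) (mul_lt_mul_of_pos_left hab hd0)
      exact div_lt_div_of_pos_right (by linarith) h1d
    have hΨ0 : Ψ 0 = 0 := by simp [Ψ, h.map_zero]
    have hΨ1 : Ψ 1 = 1 := by
      simp only [Ψ, mul_one, h.map_fulcrum, sub_zero]
      exact div_self h1d.ne'
    have hz : (0:ℝ) ∈ Icc (0:ℝ) 1 := by simp
    have ho : (1:ℝ) ∈ Icc (0:ℝ) 1 := by simp
    have hsurj : ∀ y ∈ Icc (0:ℝ) 1, ∃ x ∈ Icc (0:ℝ) 1, Ψ x = y := by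
      intro y hy
      have := intermediate_value_Icc (zero_le_one (α := ℝ)) hΨc
      rw [hΨ0, hΨ1] at this
      exact this hy
    have hL : ∀ x ∈ Icc (0:ℝ) 1, Function.invFunOn Ψ (Icc 0 1) (Ψ x) = x := by
      intro x hx
      exact hΨm.injOn.leftInvOn_invFunOn hx
    refine ⟨δ, h.fulcrum_mem, Ψ, Function.invFunOn Ψ (Icc 0 1), hΨc, hΨm, hΨ0, hΨ1, ?_, hL,
      ?_, ?_, ?_⟩
    · intro x hx
      refine ⟨?_, ?_⟩
      · rw [← hΨ0]; exact hΨm.monotoneOn hz hx hx.1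
      · rw [← hΨ1]; exact hΨm.monotoneOn hx ho hx.2
    · intro y hy
      exact Function.invFunOn_eq (hsurj y hy)
    · intro u hu hud
      simp only [Ψ]
      rw [mul_div_cancel₀ _ hd0.ne', mul_div_cancel₀ _ h1d.ne']
      ring
    · intro u hu hud
      obtain ⟨us, hus, hc, hv, ha⟩ := h.square u hu hud.ne'
      have hc1 : us < δ := by
        rcases hc with hc | hc
        · linarith [hc.1]
        · exact hc.1
      rw [abs_of_neg (by linarith)] at ha
      have hm : us / δ ∈ Icc (0:ℝ) 1 :=
        ⟨div_nonneg hus.1 hd0.le, (div_le_one hd0).2 hc1.le⟩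
      have hp : Ψ (us / δ) = (1 - u) / (1 - δ) := by
        simp only [Ψ]
        rw [mul_div_cancel₀ _ hd0.ne', hv]
        congr 1
        linarith
      rw [← hp, hL _ hm, mul_div_cancel₀ _ hd0.ne']
      linarith
  · rintro ⟨δ, ⟨hd0, hd1⟩, Ψ, Ψinv, hΨc, hΨm, hΨ0, hΨ1, hΨr, hL, hR, hV1, hV2⟩
    have h1d : 0 < 1 - δ := by linarith
    have hdiv : ∀ u ∈ Icc (0:ℝ) δ, u / δ ∈ Icc (0:ℝ) 1 := by
      intro u hu
      exact ⟨div_nonneg hu.1 hd0.le, (div_le_one hd0).2 hu.2⟩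
    let g : ℝ → ℝ := fun u => 1 - (1 - δ) * Ψ (u / δ)
    have hgV : ∀ u ∈ Icc (0:ℝ) δ, V u = g u - u := by
      intro u hu
      rw [hV1 u ⟨hu.1, by linarith [hu.2]⟩ hu.2]
      simp only [g]
      ring
    have hgc : ContinuousOn g (Icc 0 δ) := by
      have : ContinuousOn (fun x => Ψ (x / δ)) (Icc 0 δ) :=
        hΨc.comp (by fun_prop) hdiv
      exact ContinuousOn.sub (by fun_prop) (ContinuousOn.mul (by fun_prop) this)
    have hga : StrictAntiOn g (Icc 0 δ) := by
      intro a ha b hb hab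
      have := hΨm (hdiv a ha) (hdiv b hb) (div_lt_div_of_pos_right hab hd0)
      simp only [g]
      nlinarith
    have hg0 : g 0 = 1 := by simp [g, hΨ0]
    have hgd : g δ = δ := by simp [g, div_self hd0.ne', hΨ1]
    have hz : (0:ℝ) ∈ Icc (0:ℝ) δ := ⟨le_refl _, hd0.le⟩
    have ho : δ ∈ Icc (0:ℝ) δ := ⟨hd0.le, le_refl _⟩
    have hgr : ∀ u ∈ Icc (0:ℝ) δ, g u ∈ Icc δ 1 := by
      intro u hu
      refine ⟨?_, ?_⟩
      · have := hga.antitoneOn hu ho hu.2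
        rwa [hgd] at this
      · have := hga.antitoneOn hz hu hu.1
        rwa [hg0] at this
    have hgs : ∀ w ∈ Icc δ 1, ∃ u ∈ Icc (0:ℝ) δ, g u = w := by
      intro w hw
      have := intermediate_value_Icc' hd0.le hgc
      rw [hg0, hgd] at this
      exact this hw
    have hVd : V δ = 0 := by rw [hgV δ ho, hgd, sub_self]
    have hVg : ∀ u ∈ Icc (0:ℝ) δ, V (g u) = V u := by
      intro u hu
      rcases eq_or_lt_of_le hu.2 with he | hlt
      · rw [he, hgd]
      · have hlt' : δ < g u := by
          have := hga hu ho hlt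
          rwa [hgd] at this
        have hr := hgr u hu
        rw [hV2 (g u) ⟨by linarith, hr.2⟩ hlt', hgV u hu]
        have : (1 - g u) / (1 - δ) = Ψ (u / δ) := by
          simp only [g]
          rw [sub_sub_cancel, mul_div_cancel_left₀ _ h1d.ne']
        rw [this, hL _ (hdiv u hu), mul_div_cancel₀ _ hd0.ne']
    have hVa : StrictAntiOn V (Icc 0 δ) := by
      intro a ha b hb hab
      have := hga ha hb hab
      rw [hgV a ha, hgV b hb]
      linarith
    have hVc1 : ContinuousOn V (Icc 0 δ) :=
      (hgc.sub continuousOn_id).congr hgV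
    have hVc2 : ContinuousOn V (Icc δ 1) := by
      rw [continuousOn_iff_isClosed]
      intro C hC
      refine ⟨g '' (Icc 0 δ ∩ V ⁻¹' C), ?_, ?_⟩
      · have h1 : IsClosed (Icc 0 δ ∩ V ⁻¹' C) :=
          hVc1.preimage_isClosed_of_isClosed isClosed_Icc hC
        have h2 : IsCompact (Icc 0 δ ∩ V ⁻¹' C) :=
          isCompact_Icc.of_isClosed_subset h1 inter_subset_left
        exact (h2.image_of_continuousOn (hgc.mono inter_subset_left)).isClosed
      · ext w
        constructor
        · rintro ⟨hwC, hw⟩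
          obtain ⟨u, hu, rfl⟩ := hgs w hw
          refine ⟨⟨u, ⟨hu, ?_⟩, rfl⟩, hw⟩
          have : V (g u) ∈ C := hwC
          rwa [hVg u hu] at this
        · rintro ⟨⟨u, ⟨hu, huC⟩, rfl⟩, hw⟩
          refine ⟨?_, hw⟩
          change V (g u) ∈ C
          rw [hVg u hu]
          exact huC
    refine ⟨δ, hV01, ⟨hd0, hd1⟩, ?_, ?_, hVd, ?_, hVa, ?_, ?_⟩
    · rw [hgV 0 hz, hg0, sub_zero]
    · have := hVg 0 hz
      rw [hg0] at this
      rw [this, hgV 0 hz, hg0, sub_zero]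
    · rw [← Icc_union_Icc_eq_Icc hd0.le hd1.le]
      exact hVc1.union_of_isClosed hVc2 isClosed_Icc isClosed_Icc
    · intro a ha b hb hab
      obtain ⟨u, hu, rfl⟩ := hgs a ha
      obtain ⟨v, hv, rfl⟩ := hgs b hb
      rw [hVg u hu, hVg v hv]
      exact hVa hv hu ((hga.lt_iff_gt hu hv).1 hab)
    · intro u hu hne
      rcases lt_or_gt_of_ne hne with hlt | hgt
      · have hu' : u ∈ Icc (0:ℝ) δ := ⟨hu.1, hlt.le⟩
        have hlt' : δ < g u := by
          have := hga hu' ho hlt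
          rwa [hgd] at this
        refine ⟨g u, ⟨by linarith, (hgr u hu').2⟩, Or.inl ⟨hlt, hlt'⟩, hVg u hu', ?_⟩
        rw [abs_of_pos (by linarith), hgV u hu']
      · obtain ⟨v, hv, rfl⟩ := hgs u ⟨le_of_lt hgt, hu.2⟩
        have hvd : v < δ := by
          refine lt_of_le_of_ne hv.2 ?_
          rintro rfl
          exact hne hgd
        refine ⟨v, ⟨hv.1, by linarith⟩, Or.inr ⟨hvd, hgt⟩, (hVg v hv).symm, ?_⟩
        rw [abs_of_neg (by linarith), hVg v hv, hgV v hv]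
        ring
end

section
/- Let 𝒱 be a v-transform with fulcrum δ and let 𝒱⁻¹ : [0,1] → [0,δ] denote its partial inverse. Then for every v ∈ [0,1], the set {u ∈ [0,1] : 𝒱(u) ≤ v} is exactly the closed interval [𝒱⁻¹(v), 𝒱⁻¹(v) + v]; in particular this set has Lebesgue measure v. -/
open Set MeasureTheory ProbabilityTheory

/-- for a v-transform `𝒱` with fulcrum `δ` and any `v ∈ [0,1]`,
the set `{u ∈ [0,1] : 𝒱(u) ≤ v}` is the interval `[𝒱⁻¹(v), 𝒱⁻¹(v) + v]`,
which has Lebesgue measure `v`. -/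
theorem vtransform_sublevel_interval (V : ℝ → ℝ) (δ : ℝ) (hV : IsVTransform V δ)
    (v : ℝ) (hv : v ∈ Set.Icc (0:ℝ) 1) :
    {u | u ∈ Set.Icc (0:ℝ) 1 ∧ V u ≤ v} =
      Set.Icc (partialInverse V v) (partialInverse V v + v) ∧
    volume {u | u ∈ Set.Icc (0:ℝ) 1 ∧ V u ≤ v} = ENNReal.ofReal v := by
  obtain ⟨h0, h1⟩ := hV.fulcrum_mem
  obtain ⟨hv0, hv1⟩ := hv
  have key : ∃ a b : ℝ, a ∈ Set.Icc 0 δ ∧ b ∈ Set.Icc δ 1 ∧ V a = v ∧ V b = v ∧ b = a + v := by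
    have hc : ContinuousOn V (Set.Icc 0 δ) :=
      hV.contOn.mono (Set.Icc_subset_Icc le_rfl h1.le)
    have hi := intermediate_value_Icc' h0.le hc
    rw [hV.map_zero, hV.map_fulcrum] at hi
    obtain ⟨a, ha, hav⟩ := hi ⟨hv0, hv1⟩
    by_cases had : a = δ
    · subst had
      have : v = 0 := by rw [← hav, hV.map_fulcrum]
      exact ⟨a, a, ha, ⟨le_rfl, h1.le⟩, hav, hav, by linarith⟩
    · obtain ⟨b, hb, hor, hVb, habs⟩ := hV.square a ⟨ha.1, ha.2.trans h1.le⟩ had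
      rcases hor with ⟨h2, h3⟩ | ⟨h2, h3⟩
      · rw [abs_of_pos (by linarith)] at habs
        exact ⟨a, b, ha, ⟨h3.le, hb.2⟩, hav, hVb.trans hav, by linarith⟩
      · exact absurd ha.2 (not_le.mpr h3)
  obtain ⟨a, b, ha, hb, hVa, hVb, hab⟩ := key
  have hp : partialInverse V v = a := by
    apply IsLeast.csInf_eq
    refine ⟨⟨⟨ha.1, ha.2.trans h1.le⟩, hVa⟩, ?_⟩
    rintro u ⟨hu, hVu⟩
    by_contra! hlt
    have := hV.strictAntiOn ⟨hu.1, hlt.le.trans ha.2⟩ ha hlt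
    linarith
  have hset : {u | u ∈ Set.Icc (0:ℝ) 1 ∧ V u ≤ v} =
      Set.Icc (partialInverse V v) (partialInverse V v + v) := by
    rw [hp, ← hab]
    ext u
    constructor
    · rintro ⟨hu, hVu⟩
      constructor
      · by_contra! hlt
        have := hV.strictAntiOn ⟨hu.1, hlt.le.trans ha.2⟩ ha hlt
        linarith
      · by_contra! hlt
        have := hV.strictMonoOn hb ⟨hb.1.trans hlt.le, hu.2⟩ hlt
        linarith
    · rintro ⟨hua, hub⟩
      refine ⟨⟨ha.1.trans hua, hub.trans hb.2⟩, ?_⟩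
      rcases le_total u δ with h | h
      · rw [← hVa]
        exact hV.strictAntiOn.antitoneOn ha ⟨ha.1.trans hua, h⟩ hua
      · rw [← hVb]
        exact hV.strictMonoOn.monotoneOn ⟨h, hub.trans hb.2⟩ hb hub
  refine ⟨hset, ?_⟩
  rw [hset, Real.volume_Icc]
  congr 1
  ring
end

section
/- Every v-transform 𝒱 preserves the uniform distribution: if U is a random variable uniformly distributed on [0,1], then 𝒱(U) is uniformly distributed on [0,1]. Equivalently, 𝒱 is a Lebesgue-measure-preserving transformation of [0,1]: for every Borel set B ⊆ [0,1], the Lebesgue measure of 𝒱⁻¹(B) equals the Lebesgue measure of B. -/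
open Set MeasureTheory ProbabilityTheory

theorem vtransform_aux (V : ℝ → ℝ) (δ : ℝ) (hV : IsVTransform V δ) :
    AEMeasurable V (volume.restrict (Set.Icc 0 1)) ∧
    Measure.map V (volume.restrict (Set.Icc 0 1)) = volume.restrict (Set.Icc (0:ℝ) 1) := by
  have hm : AEMeasurable V (volume.restrict (Set.Icc 0 1)) :=
    hV.contOn.aemeasurable measurableSet_Icc
  refine ⟨hm, ?_⟩
  obtain ⟨hd0, hd1⟩ := hV.fulcrum_mem
  refine Measure.ext_of_Iic _ _ fun x => ?_
  rw [Measure.map_apply_of_aemeasurable hm measurableSet_Iic,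
    Measure.restrict_apply' measurableSet_Icc, Measure.restrict_apply' measurableSet_Icc]
  rcases lt_or_ge x 0 with hx | hx
  · have h1 : V ⁻¹' Iic x ∩ Icc 0 1 = ∅ := by
      ext u
      simp only [mem_inter_iff, mem_preimage, mem_Iic, mem_empty_iff_false, iff_false, not_and]
      intro h hu
      have := (hV.mapsTo u hu).1
      linarith
    have h2 : Iic x ∩ Icc (0:ℝ) 1 = ∅ := by
      ext u
      simp only [mem_inter_iff, mem_Iic, mem_Icc, mem_empty_iff_false, iff_false, not_and]
      intro h hu
      linarith
    rw [h1, h2]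
  rcases lt_or_ge 1 x with hx1 | hx1
  · have h1 : V ⁻¹' Iic x ∩ Icc 0 1 = Icc 0 1 := by
      refine inter_eq_right.2 fun u hu => ?_
      have := (hV.mapsTo u hu).2
      simp only [mem_preimage, mem_Iic]
      linarith
    have h2 : Iic x ∩ Icc (0:ℝ) 1 = Icc 0 1 := by
      refine inter_eq_right.2 fun u hu => ?_
      simp only [mem_Iic]
      linarith [hu.2]
    rw [h1, h2]
  have key : ∃ a b, a ∈ Icc 0 δ ∧ b ∈ Icc δ 1 ∧ V a = x ∧ V b = x ∧ b - a = x := by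
    have hc : ContinuousOn V (Icc 0 δ) := hV.contOn.mono (Icc_subset_Icc_right hd1.le)
    have := intermediate_value_Icc' hd0.le hc
    rw [hV.map_zero, hV.map_fulcrum] at this
    obtain ⟨a, ha, hax⟩ := this ⟨hx, hx1⟩
    by_cases had : a = δ
    · subst had
      refine ⟨a, a, ha, ⟨le_rfl, hd1.le⟩, hax, hax, ?_⟩
      rw [← hax, hV.map_fulcrum, sub_self]
    · have hlt : a < δ := lt_of_le_of_ne ha.2 had
      obtain ⟨b, hb, hc, hb1, hb2⟩ := hV.square a ⟨ha.1, by linarith⟩ had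
      have hdb : δ < b := by
        rcases hc with h | h
        · exact h.2
        · linarith [h.2]
      refine ⟨a, b, ha, ⟨hdb.le, hb.2⟩, hax, hb1.trans hax, ?_⟩
      rw [abs_of_pos (by linarith)] at hb2
      rw [hb2, hax]
  obtain ⟨a, b, ha, hb, hVa, hVb, hab⟩ := key
  have h1 : V ⁻¹' Iic x ∩ Icc 0 1 = Icc a b := by
    ext u
    simp only [mem_inter_iff, mem_preimage, mem_Iic]
    constructor
    · rintro ⟨h, hu⟩
      rcases le_total u δ with hud | hud
      · refine ⟨?_, hud.trans hb.1⟩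
        rw [← hVa] at h
        exact (hV.strictAntiOn.le_iff_ge ⟨hu.1, hud⟩ ha).1 h
      · refine ⟨ha.2.trans hud, ?_⟩
        rw [← hVb] at h
        exact (hV.strictMonoOn.le_iff_le ⟨hud, hu.2⟩ hb).1 h
    · rintro ⟨h, h'⟩
      refine ⟨?_, ha.1.trans h, h'.trans hb.2⟩
      rcases le_total u δ with hud | hud
      · rw [← hVa]
        exact (hV.strictAntiOn.le_iff_ge ⟨ha.1.trans h, hud⟩ ha).2 h
      · rw [← hVb]
        exact (hV.strictMonoOn.le_iff_le ⟨hud, h'.trans hb.2⟩ hb).2 h'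
  have h2 : Iic x ∩ Icc (0:ℝ) 1 = Icc 0 x := by
    ext u
    simp only [mem_inter_iff, mem_Iic, mem_Icc]
    constructor
    · rintro ⟨h, h', _⟩
      exact ⟨h', h⟩
    · rintro ⟨h, h'⟩
      exact ⟨h', h, h'.trans hx1⟩
  rw [h1, h2, Real.volume_Icc, Real.volume_Icc, hab, sub_zero]

/-- a v-transform preserves the uniform distribution: if `U` is
uniformly distributed on `[0,1]` then so is `𝒱(U)`; equivalently `𝒱` is a
Lebesgue-measure-preserving transformation of `[0,1]`: for every Borel set
`B ⊆ [0,1]` the Lebesgue measure of `𝒱⁻¹(B)` equals that of `B`. -/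
theorem vtransform_measure_preserving (V : ℝ → ℝ) (δ : ℝ) (hV : IsVTransform V δ) :
    (∀ (Ω : Type) (_ : MeasurableSpace Ω) (μ : Measure Ω), IsProbabilityMeasure μ →
      ∀ U : Ω → ℝ, Measurable U →
        Measure.map U μ = volume.restrict (Set.Icc 0 1) →
        Measure.map (fun ω => V (U ω)) μ = volume.restrict (Set.Icc 0 1)) ∧
    (∀ B : Set ℝ, MeasurableSet B → B ⊆ Set.Icc 0 1 →
      volume (V ⁻¹' B ∩ Set.Icc 0 1) = volume B) := by


  obtain ⟨hm, hmap⟩ := vtransform_aux V δ hV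
  refine ⟨?_, ?_⟩
  · intro Ω _ μ _ U hU hUm
    rw [← hUm] at hm
    have h := AEMeasurable.map_map_of_aemeasurable hm hU.aemeasurable
    rw [hUm, hmap] at h
    exact h.symm
  · intro B hB hBs
    have h := congrArg (fun ν => ν B) hmap
    rw [Measure.map_apply_of_aemeasurable hm hB, Measure.restrict_apply' measurableSet_Icc,
      Measure.restrict_apply' measurableSet_Icc, inter_eq_left.2 hBs] at h
    exact h
end

section
/- Let 𝒱 be a v-transform with fulcrum δ, differentiable at every point of [0,1] except δ, with conditional down probability Δ taking values in [0,1] and measurable, and let 𝒱⁻¹(v,w) be its stochastic inversion function. If V and W are independent random variables each uniformly distributed on [0,1], then U = 𝒱⁻¹(V, W) is uniformly distributed on [0,1]. -/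
open Set MeasureTheory ProbabilityTheory

section Helpers

variable {V : ℝ → ℝ} {δ : ℝ}

theorem vt_pinv (hV : IsVTransform V δ) {u : ℝ} (hu : u ∈ Set.Icc 0 δ) :
    partialInverse V (V u) = u := by
  have hδ := hV.fulcrum_mem
  apply IsLeast.csInf_eq
  refine ⟨⟨⟨hu.1, hu.2.trans hδ.2.le⟩, rfl⟩, ?_⟩
  rintro x ⟨hx, hxu⟩
  by_contra! h
  have hx' : x ∈ Set.Icc 0 δ := ⟨hx.1, h.le.trans hu.2⟩
  have := hV.strictAntiOn hx' hu h
  linarith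

theorem vt_val (hV : IsVTransform V δ) {u : ℝ} (hu : u ∈ Set.Ioo 0 δ) :
    V u ∈ Set.Ioo (0:ℝ) 1 := by
  have hδ := hV.fulcrum_mem
  have h1 := hV.strictAntiOn ⟨le_rfl, hδ.1.le⟩ (Set.Ioo_subset_Icc_self hu) hu.1
  have h2 := hV.strictAntiOn (Set.Ioo_subset_Icc_self hu) ⟨hδ.1.le, le_rfl⟩ hu.2
  rw [hV.map_zero] at h1
  rw [hV.map_fulcrum] at h2
  exact ⟨h2, h1⟩

theorem vt_val' (hV : IsVTransform V δ) {u : ℝ} (hu : u ∈ Set.Ioo δ 1) :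
    V u ∈ Set.Ioo (0:ℝ) 1 := by
  have hδ := hV.fulcrum_mem
  have h1 := hV.strictMonoOn (Set.Ioo_subset_Icc_self hu) ⟨hδ.2.le, le_rfl⟩ hu.2
  have h2 := hV.strictMonoOn ⟨le_rfl, hδ.2.le⟩ (Set.Ioo_subset_Icc_self hu) hu.1
  rw [hV.map_one] at h1
  rw [hV.map_fulcrum] at h2
  exact ⟨h2, h1⟩

theorem vt_surj (hV : IsVTransform V δ) {v : ℝ} (hv : v ∈ Set.Ioo (0:ℝ) 1) :
    partialInverse V v ∈ Set.Ioo 0 δ ∧ V (partialInverse V v) = v := by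
  have hδ := hV.fulcrum_mem
  have hc : ContinuousOn V (Set.Icc 0 δ) := hV.contOn.mono (Set.Icc_subset_Icc_right hδ.2.le)
  have := intermediate_value_Ioo' hδ.1.le hc
  rw [hV.map_zero, hV.map_fulcrum] at this
  obtain ⟨u, hu, rfl⟩ := this hv
  rw [vt_pinv hV (Set.Ioo_subset_Icc_self hu)]
  exact ⟨hu, rfl⟩

theorem vt_dual (hV : IsVTransform V δ) {u : ℝ} (hu : u ∈ Set.Ioo 0 δ) :
    u + V u ∈ Set.Ioo δ 1 ∧ V (u + V u) = V u := by
  have hδ := hV.fulcrum_mem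
  obtain ⟨t, ht, h | h, h1, h2⟩ := hV.square u ⟨hu.1.le, hu.2.le.trans hδ.2.le⟩ hu.2.ne
  · rw [abs_of_pos (by linarith)] at h2
    have : t = u + V u := by linarith
    subst this
    refine ⟨⟨h.2, lt_of_le_of_ne ht.2 ?_⟩, h1⟩
    intro h3
    rw [h3, hV.map_one] at h1
    linarith [(vt_val hV hu).2]
  · linarith [hu.2]

theorem vt_dual' (hV : IsVTransform V δ) {t : ℝ} (ht : t ∈ Set.Ioo δ 1) :
    V t + partialInverse V (V t) = t := by
  have hδ := hV.fulcrum_mem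
  obtain ⟨u, hu, h | h, h1, h2⟩ := hV.square t ⟨hδ.1.le.trans ht.1.le, ht.2.le⟩ ht.1.ne'
  · linarith [ht.1]
  · rw [abs_of_neg (by linarith)] at h2
    rw [← h1, vt_pinv hV ⟨hu.1, h.1.le⟩]
    linarith

theorem vt_panti (hV : IsVTransform V δ) :
    StrictAntiOn (partialInverse V) (Set.Ioo 0 1) := by
  intro a ha b hb hab
  obtain ⟨h1, h2⟩ := vt_surj hV ha
  obtain ⟨h3, h4⟩ := vt_surj hV hb
  by_contra! h
  have := hV.strictAntiOn.antitoneOn (Set.Ioo_subset_Icc_self h1)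
    (Set.Ioo_subset_Icc_self h3) h
  linarith

theorem vt_q (hV : IsVTransform V δ) {v : ℝ} (hv : v ∈ Set.Ioo (0:ℝ) 1) :
    v + partialInverse V v ∈ Set.Ioo δ 1 ∧ V (v + partialInverse V v) = v := by
  obtain ⟨h1, h2⟩ := vt_surj hV hv
  have := vt_dual hV h1
  rwa [h2, add_comm] at this

theorem vt_qmono (hV : IsVTransform V δ) :
    StrictMonoOn (fun v => v + partialInverse V v) (Set.Ioo 0 1) := by
  intro a ha b hb hab
  obtain ⟨h1, h2⟩ := vt_q hV ha
  obtain ⟨h3, h4⟩ := vt_q hV hb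
  by_contra! h
  have := hV.strictMonoOn.monotoneOn (Set.Ioo_subset_Icc_self h3)
    (Set.Ioo_subset_Icc_self h1) h
  linarith

theorem vt_pimage (hV : IsVTransform V δ) :
    partialInverse V '' Set.Ioo 0 1 = Set.Ioo 0 δ := by
  ext u
  constructor
  · rintro ⟨v, hv, rfl⟩
    exact (vt_surj hV hv).1
  · intro hu
    exact ⟨V u, vt_val hV hu, vt_pinv hV (Set.Ioo_subset_Icc_self hu)⟩

theorem vt_qimage (hV : IsVTransform V δ) :
    (fun v => v + partialInverse V v) '' Set.Ioo 0 1 = Set.Ioo δ 1 := by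
  ext u
  constructor
  · rintro ⟨v, hv, rfl⟩
    exact (vt_q hV hv).1
  · intro hu
    exact ⟨V u, vt_val' hV hu, vt_dual' hV hu⟩

theorem vt_pcont (hV : IsVTransform V δ) :
    ContinuousOn (partialInverse V) (Set.Ioo 0 1) := by
  have : LipschitzOnWith 1 (partialInverse V) (Set.Ioo 0 1) := by
    apply LipschitzOnWith.of_le_add
    intro a ha b hb
    rcases le_total a b with h | h
    · have := (vt_qmono hV).monotoneOn ha hb h
      rw [dist_comm, Real.dist_eq, abs_of_nonneg (by linarith)]
      linarith
    · have := (vt_panti hV).antitoneOn hb ha h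
      linarith [dist_nonneg (x := a) (y := b)]
  exact this.continuousOn

theorem vt_pderiv (hV : IsVTransform V δ)
    (hdiff : ∀ u ∈ Set.Icc (0:ℝ) 1, u ≠ δ →
      DifferentiableWithinAt ℝ V (Set.Icc 0 1) u) {v : ℝ} (hv : v ∈ Set.Ioo (0:ℝ) 1) :
    HasDerivAt (partialInverse V) (-downProb V δ v) v := by
  have hδ := hV.fulcrum_mem
  obtain ⟨h1, h2⟩ := vt_surj hV hv
  set u := partialInverse V v with hu
  have hd : DifferentiableAt ℝ V u :=
    (hdiff u ⟨h1.1.le, h1.2.le.trans hδ.2.le⟩ h1.2.ne).differentiableAt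
      (Icc_mem_nhds h1.1 (h1.2.trans hδ.2))
  have hdw : derivWithin V (Set.Icc 0 δ) u = deriv V u :=
    derivWithin_of_mem_nhds (Icc_mem_nhds h1.1 h1.2)
  have hanti : AntitoneOn (fun x => x + V x) (Set.Ioo 0 δ) := by
    intro a ha b hb hab
    obtain ⟨h3, h4⟩ := vt_dual hV ha
    obtain ⟨h5, h6⟩ := vt_dual hV hb
    by_contra! h
    have h7 := hV.strictMonoOn (Set.Ioo_subset_Icc_self h3) (Set.Ioo_subset_Icc_self h5) h
    have h8 := hV.strictAntiOn.antitoneOn (Set.Ioo_subset_Icc_self ha)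
      (Set.Ioo_subset_Icc_self hb) hab
    linarith
  have hne : deriv V u ≠ 0 := by
    have h3 : derivWithin (fun x => x + V x) (Set.Ioo 0 δ) u ≤ 0 := hanti.derivWithin_nonpos
    rw [derivWithin_of_mem_nhds (Ioo_mem_nhds h1.1 h1.2)] at h3
    have h4 : HasDerivAt (fun x => x + V x) (1 + deriv V u) u :=
      (hasDerivAt_id u).add hd.hasDerivAt
    rw [h4.deriv] at h3
    intro h
    linarith
  have hev : ∀ᶠ y in nhds v, V (partialInverse V y) = y := by
    filter_upwards [Ioo_mem_nhds hv.1 hv.2] with y hy using (vt_surj hV hy).2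
  have := HasDerivAt.of_local_left_inverse ((vt_pcont hV).continuousAt (Ioo_mem_nhds hv.1 hv.2))
    hd.hasDerivAt hne hev
  have he : -downProb V δ v = (deriv V u)⁻¹ := by
    unfold downProb
    rw [← hu, hdw, neg_div, neg_neg, one_div]
  rw [he]
  exact this

theorem vt_inner (d : ℝ) (hd : d ∈ Set.Icc (0:ℝ) 1) (a b : ℝ) (A : Set ℝ) :
    (volume.restrict (Set.Icc (0:ℝ) 1)) {w | (if w ≤ d then a else b) ∈ A}
      = ENNReal.ofReal d * A.indicator 1 a + ENNReal.ofReal (1 - d) * A.indicator 1 b := by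
  classical
  have hpw : {w | (if w ≤ d then a else b) ∈ A}
      = (Set.Iic d ∩ {_w | a ∈ A}) ∪ (Set.Ioi d ∩ {_w | b ∈ A}) := by
    ext w
    by_cases h : w ≤ d
    · simp [h]
    · simp [h, not_le.1 h]
  have h1 : (volume.restrict (Set.Icc (0:ℝ) 1)) (Set.Iic d) = ENNReal.ofReal d := by
    rw [Measure.restrict_apply measurableSet_Iic]
    have : Set.Iic d ∩ Set.Icc (0:ℝ) 1 = Set.Icc 0 d := by
      ext x; simp only [Set.mem_inter_iff, Set.mem_Iic, Set.mem_Icc]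
      exact ⟨fun h => ⟨h.2.1, h.1⟩, fun h => ⟨h.2, h.1, h.2.trans hd.2⟩⟩
    rw [this, Real.volume_Icc, sub_zero]
  have h2 : (volume.restrict (Set.Icc (0:ℝ) 1)) (Set.Ioi d) = ENNReal.ofReal (1 - d) := by
    rw [Measure.restrict_apply measurableSet_Ioi]
    have : Set.Ioi d ∩ Set.Icc (0:ℝ) 1 = Set.Ioc d 1 := by
      ext x; simp only [Set.mem_inter_iff, Set.mem_Ioi, Set.mem_Icc, Set.mem_Ioc]
      exact ⟨fun h => ⟨h.1, h.2.2⟩, fun h => ⟨h.1, hd.1.trans h.1.le, h.2⟩⟩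
    rw [this, Real.volume_Ioc]
  rw [hpw, measure_union _ (measurableSet_Ioi.inter (MeasurableSet.const _))]
  · by_cases ha : a ∈ A <;> by_cases hb : b ∈ A <;> simp [ha, hb, h1, h2]
  · rw [Set.disjoint_left]
    rintro x ⟨hx, -⟩ ⟨hx', -⟩
    exact (not_le.2 (Set.mem_Ioi.1 hx')) (Set.mem_Iic.1 hx)

end Helpers

/-- if `V` and `W` are independent uniform random variables on
`[0,1]`, then the stochastic inversion `U = 𝒱⁻¹(V,W)` is uniformly distributed
on `[0,1]`. -/
theorem stochInv_uniform {Ω : Type*} [MeasurableSpace Ω]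
    (μ : Measure Ω) [IsProbabilityMeasure μ]
    (V : ℝ → ℝ) (δ : ℝ) (hV : IsVTransform V δ)
    (hdiff : ∀ u ∈ Set.Icc (0:ℝ) 1, u ≠ δ →
      DifferentiableWithinAt ℝ V (Set.Icc 0 1) u)
    (hΔmeas : Measurable (downProb V δ))
    (hΔrange : ∀ v ∈ Set.Icc (0:ℝ) 1, downProb V δ v ∈ Set.Icc (0:ℝ) 1)
    (Vr Wr : Ω → ℝ) (hVr : Measurable Vr) (hWr : Measurable Wr)
    (hVunif : Measure.map Vr μ = volume.restrict (Set.Icc 0 1))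
    (hWunif : Measure.map Wr μ = volume.restrict (Set.Icc 0 1))
    (hindep : IndepFun Vr Wr μ) :
    Measure.map (fun ω => stochInv V δ (Vr ω) (Wr ω)) μ
      = volume.restrict (Set.Icc 0 1) := by
  classical
  have hδ := hV.fulcrum_mem
  set p : ℝ → ℝ := (Set.Ioo (0:ℝ) 1).piecewise (partialInverse V) (fun _ => 0) with hp
  have hpm : Measurable p :=
    (vt_pcont hV).measurable_piecewise continuousOn_const measurableSet_Ioo
  set F : ℝ × ℝ → ℝ := fun z => if z.2 ≤ downProb V δ z.1 then p z.1 else z.1 + p z.1 with hF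
  have hFm : Measurable F :=
    Measurable.ite (measurableSet_le measurable_snd (hΔmeas.comp measurable_fst))
      (hpm.comp measurable_fst) (measurable_fst.add (hpm.comp measurable_fst))
  have hae : ∀ᵐ ω ∂μ, Vr ω ∈ Set.Ioo (0:ℝ) 1 := by
    have : ∀ᵐ v ∂(Measure.map Vr μ), v ∈ Set.Ioo (0:ℝ) 1 := by
      rw [hVunif, ← Measure.restrict_congr_set (Ioo_ae_eq_Icc (μ := volume) (a := (0:ℝ)) (b := 1))]
      exact ae_restrict_mem measurableSet_Ioo
    exact ae_of_ae_map hVr.aemeasurable this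
  have hcongr : (fun ω => stochInv V δ (Vr ω) (Wr ω)) =ᵐ[μ] fun ω => F (Vr ω, Wr ω) := by
    filter_upwards [hae] with ω hω
    simp only [hF, stochInv, hp, Set.piecewise_eq_of_mem _ _ _ hω]
  rw [Measure.map_congr hcongr]
  have hjoint : Measure.map (fun ω => (Vr ω, Wr ω)) μ
      = (volume.restrict (Set.Icc (0:ℝ) 1)).prod (volume.restrict (Set.Icc (0:ℝ) 1)) := by
    rw [(indepFun_iff_map_prod_eq_prod_map_map hVr.aemeasurable hWr.aemeasurable).1 hindep,
      hVunif, hWunif]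
  have hcomp : Measure.map (fun ω => F (Vr ω, Wr ω)) μ
      = Measure.map F (Measure.map (fun ω => (Vr ω, Wr ω)) μ) :=
    (Measure.map_map hFm (hVr.prodMk hWr)).symm
  rw [hcomp, hjoint]
  ext A hA
  rw [Measure.map_apply hFm hA, Measure.prod_apply (hFm hA)]
  rw [← Measure.restrict_congr_set (Ioo_ae_eq_Icc (μ := volume) (a := (0:ℝ)) (b := 1))]
  have hstep : ∀ v ∈ Set.Ioo (0:ℝ) 1,
      (volume.restrict (Set.Ioo (0:ℝ) 1)) (Prod.mk v ⁻¹' (F ⁻¹' A))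
      = ENNReal.ofReal |-downProb V δ v| * A.indicator 1 (partialInverse V v)
        + ENNReal.ofReal |1 + -downProb V δ v| * A.indicator 1 (v + partialInverse V v) := by
    intro v hv
    have hd := hΔrange v (Set.Ioo_subset_Icc_self hv)
    rw [Measure.restrict_congr_set (Ioo_ae_eq_Icc (μ := volume) (a := (0:ℝ)) (b := 1)),
      abs_neg, abs_of_nonneg hd.1, ← sub_eq_add_neg, abs_of_nonneg (sub_nonneg.2 hd.2),
      ← vt_inner _ hd]
    congr 1
    ext w
    simp only [hF, hp, Set.mem_preimage, Set.piecewise_eq_of_mem _ _ _ hv, Set.mem_ofPred_eq]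
  rw [setLIntegral_congr_fun measurableSet_Ioo hstep]
  have hpd : ∀ v ∈ Set.Ioo (0:ℝ) 1, HasDerivWithinAt (partialInverse V) (-downProb V δ v)
      (Set.Ioo 0 1) v := fun v hv => (vt_pderiv hV hdiff hv).hasDerivWithinAt
  have hqd : ∀ v ∈ Set.Ioo (0:ℝ) 1, HasDerivWithinAt (fun v => v + partialInverse V v)
      (1 + -downProb V δ v) (Set.Ioo 0 1) v := fun v hv =>
    ((hasDerivAt_id v).add (vt_pderiv hV hdiff hv)).hasDerivWithinAt
  have e1 := lintegral_image_eq_lintegral_abs_deriv_mul measurableSet_Ioo hpd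
    (vt_panti hV).injOn (A.indicator 1)
  have e2 := lintegral_image_eq_lintegral_abs_deriv_mul measurableSet_Ioo hqd
    (vt_qmono hV).injOn (A.indicator 1)
  have hmeas2 : AEMeasurable (fun v => ENNReal.ofReal |1 + -downProb V δ v| *
      A.indicator (1 : ℝ → ENNReal) (v + partialInverse V v))
      (volume.restrict (Set.Ioo (0:ℝ) 1)) := by
    have h1 : Measurable (fun v => ENNReal.ofReal |1 + -downProb V δ v| *
        A.indicator (1 : ℝ → ENNReal) (v + p v)) := by
      refine Measurable.mul ?_ ?_
      · exact (measurable_norm.comp (measurable_const.add hΔmeas.neg)).ennreal_ofReal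
      · exact (measurable_one.indicator hA).comp (measurable_id.add hpm)
    refine ⟨_, h1, ?_⟩
    filter_upwards [ae_restrict_mem measurableSet_Ioo] with v hv
    simp only [hp, Set.piecewise_eq_of_mem _ _ _ hv]
  rw [lintegral_add_right' _ hmeas2, ← e1, ← e2, vt_pimage hV, vt_qimage hV,
    lintegral_indicator_one hA, lintegral_indicator_one hA]
  rw [Measure.restrict_congr_set (Ioo_ae_eq_Ioc (μ := volume) (a := (0:ℝ)) (b := δ)),
    Measure.restrict_congr_set (Ioo_ae_eq_Ioc (μ := volume) (a := δ) (b := 1)),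
    Measure.restrict_congr_set (Ioo_ae_eq_Ioc (μ := volume) (a := (0:ℝ)) (b := 1)),
    ← Set.Ioc_union_Ioc_eq_Ioc hδ.1.le hδ.2.le,
    Measure.restrict_union (Set.Ioc_disjoint_Ioc_of_le le_rfl) measurableSet_Ioc]
  rfl
end

section
/- Let 𝒱 be a v-transform with fulcrum δ whose restriction to [0,δ] is continuously differentiable on (0,δ) with nonvanishing derivative, and let Δ(v) = −1/𝒱′(𝒱⁻¹(v)) be its conditional down probability. Then ∫₀¹ Δ(v) dv = δ; equivalently, if V is uniformly distributed on [0,1] then E[Δ(V)] = δ. -/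
open Set MeasureTheory ProbabilityTheory

/-- the conditional down probability integrates to the fulcrum:
`∫₀¹ Δ(v) dv = δ`; equivalently, `E[Δ(V)] = δ` for `V` uniform on `[0,1]`. -/
theorem integral_downProb_eq_fulcrum (V : ℝ → ℝ) (δ : ℝ)
    (hV : IsVTransform V δ)
    (hC1 : ContDiffOn ℝ 1 V (Set.Ioo 0 δ))
    (hderiv : ∀ u ∈ Set.Ioo (0:ℝ) δ, deriv V u ≠ 0) :
    (∫ v in (0:ℝ)..1, downProb V δ v) = δ ∧
    (∫ v in Set.Icc (0:ℝ) 1, downProb V δ v) = δ := by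
  have hδ := hV.fulcrum_mem
  have h0 : (0:ℝ) ≤ δ := hδ.1.le
  have hsub : Set.Ioo (0:ℝ) δ ⊆ Set.Icc 0 δ := Set.Ioo_subset_Icc_self
  have himg : V '' Set.Ioo 0 δ = Set.Ioo 0 1 := by
    apply Set.Subset.antisymm
    · rintro _ ⟨u, hu, rfl⟩
      constructor
      · have := hV.strictAntiOn (hsub hu) (Set.right_mem_Icc.2 h0) hu.2
        rwa [hV.map_fulcrum] at this
      · have := hV.strictAntiOn (Set.left_mem_Icc.2 h0) (hsub hu) hu.1
        rwa [hV.map_zero] at this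
    · have := intermediate_value_Ioo' h0
        (hV.contOn.mono (Set.Icc_subset_Icc_right hδ.2.le))
      rwa [hV.map_fulcrum, hV.map_zero] at this
  have hpi : ∀ u ∈ Set.Ioo (0:ℝ) δ, partialInverse V (V u) = u := by
    intro u hu
    have hl : IsLeast {w | w ∈ Set.Icc (0:ℝ) 1 ∧ V w = V u} u := by
      refine ⟨⟨⟨hu.1.le, (hu.2.trans hδ.2).le⟩, rfl⟩, ?_⟩
      rintro w ⟨hw, hwu⟩
      by_contra hlt
      have hlt := not_le.1 hlt
      have := hV.strictAntiOn ⟨hw.1, (hlt.trans hu.2).le⟩ (hsub hu) hlt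
      exact this.ne' hwu
    exact hl.csInf_eq
  have hdw : ∀ u ∈ Set.Ioo (0:ℝ) δ, derivWithin V (Set.Icc 0 δ) u = deriv V u :=
    fun u hu => derivWithin_of_mem_nhds (Icc_mem_nhds hu.1 hu.2)
  have hneg : ∀ u ∈ Set.Ioo (0:ℝ) δ, deriv V u < 0 := by
    intro u hu
    refine lt_of_le_of_ne ?_ (hderiv u hu)
    rw [← hdw u hu]
    exact hV.strictAntiOn.antitoneOn.derivWithin_nonpos
  have hd : ∀ u ∈ Set.Ioo (0:ℝ) δ, HasDerivWithinAt V (deriv V u) (Set.Ioo 0 δ) u := by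
    intro u hu
    exact (differentiableAt_of_deriv_ne_zero (hderiv u hu)).hasDerivAt.hasDerivWithinAt
  have hinj : Set.InjOn V (Set.Ioo 0 δ) := hV.strictAntiOn.injOn.mono hsub
  have key : (∫ v in Set.Ioo (0:ℝ) 1, downProb V δ v) = δ := by
    rw [← himg, integral_image_eq_integral_abs_deriv_smul measurableSet_Ioo hd hinj]
    have : ∀ u ∈ Set.Ioo (0:ℝ) δ, |deriv V u| • downProb V δ (V u) = 1 := by
      intro u hu
      have hn := hneg u hu
      rw [downProb, hpi u hu, hdw u hu, abs_of_neg hn, smul_eq_mul]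
      have := hn.ne
      field_simp
    rw [setIntegral_congr_fun measurableSet_Ioo this]
    simp [h0]
  refine ⟨?_, ?_⟩
  · rw [intervalIntegral.integral_of_le zero_le_one, integral_Ioc_eq_integral_Ioo, key]
  · rw [integral_Icc_eq_integral_Ioo, key]
end

section
/- Let 𝒱 be a v-transform with fulcrum δ, differentiable at every point of [0,1] except δ, with conditional down probability Δ and stochastic inversion function 𝒱⁻¹(v,w). Let (V₁,W₁),…,(V_d,W_d) be pairs of uniform [0,1] random variables such that V_i is independent of W_i for each i, and suppose the joint law of (V₁,…,V_d,W₁,…,W_d) has a density c_{V,W} with respect to Lebesgue measure on [0,1]^{2d}. Define δ(u) = Δ(𝒱(u)), I_{δ,u}(x) = [0,x] if u ≤ δ and [x,1] if u > δ, and p_{δ,u}(x) = x if u ≤ δ and 1−x if u > δ. Then the random vector U = (U₁,…,U_d) with U_i = 𝒱⁻¹(V_i, W_i) has joint density c_U(u₁,…,u_d) = [∫_{I_{δ,u₁}(δ(u₁))} ⋯ ∫_{I_{δ,u_d}(δ(u_d))} c_{V,W}(𝒱(u₁),…,𝒱(u_d), z₁,…,z_d) dz₁⋯dz_d] / ∏_{i=1}^d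 p_{δ,u_i}(δ(u_i)) with respect to Lebesgue measure on [0,1]^d. -/
open Set MeasureTheory ProbabilityTheory

theorem lintegral_fin_prod_aux {E : Type*} [MeasurableSpace E] (ν : Measure E) [SigmaFinite ν]
    {n : ℕ} (f : Fin n → E → ENNReal) (hf : ∀ i, Measurable (f i)) :
    ∫⁻ x : Fin n → E, ∏ i, f i (x i) ∂(Measure.pi fun _ => ν) = ∏ i, ∫⁻ x, f i x ∂ν := by
  induction n with
  | zero => simp
  | succ n ih =>
    have h := (measurePreserving_piFinSuccAbove (fun _ : Fin (n+1) => ν) 0).symm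
    rw [← h.map_eq, lintegral_map_equiv]
    rw [Fin.prod_univ_succ, ← ih (fun i => f i.succ) (fun i => hf _)]
    rw [← lintegral_prod_mul (hf 0).aemeasurable]
    · refine lintegral_congr fun x => ?_
      rw [Fin.prod_univ_succ]
      simp [MeasurableEquiv.piFinSuccAbove_symm_apply]
    · exact (Finset.measurable_fun_prod _ fun i _ => (hf _).comp (measurable_pi_apply i)).aemeasurable

theorem map_pi_withDensity_aux {E : Type*} [MeasurableSpace E] (ν ρ : Measure E) [SigmaFinite ν]
    [SigmaFinite ρ] {n : ℕ} (k : E → ENNReal) (hk : Measurable k) (T : E → E) (hT : Measurable T)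
    (h : ∀ s, MeasurableSet s → ∫⁻ x, k x * s.indicator 1 (T x) ∂ν = ρ s)
    (F : (Fin n → E) → ENNReal) (hF : Measurable F) :
    ∫⁻ x, F x ∂(Measure.pi fun _ => ρ) =
      ∫⁻ x, (∏ i, k (x i)) * F (fun i => T (x i)) ∂(Measure.pi fun _ => ν) := by
  have hkm : Measurable fun x : Fin n → E => ∏ i, k (x i) :=
    Finset.measurable_fun_prod _ fun i _ => hk.comp (measurable_pi_apply i)
  have hTm : Measurable fun (x : Fin n → E) i => T (x i) :=
    measurable_pi_lambda _ fun i => hT.comp (measurable_pi_apply i)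
  have key : (Measure.pi fun _ : Fin n => ρ) =
      ((Measure.pi fun _ : Fin n => ν).withDensity fun x => ∏ i, k (x i)).map
        (fun x i => T (x i)) := by
    refine Measure.pi_eq fun s hs => ?_
    rw [Measure.map_apply hTm (MeasurableSet.univ_pi hs),
      withDensity_apply _ (hTm (MeasurableSet.univ_pi hs)),
      ← lintegral_indicator (hTm (MeasurableSet.univ_pi hs))]
    simp_rw [← h _ (hs _)]
    rw [← lintegral_fin_prod_aux]
    · refine lintegral_congr fun x => ?_
      rw [Finset.prod_mul_distrib]
      by_cases hx : ∀ i, T (x i) ∈ s i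
      · rw [indicator_of_mem (by simpa using hx)]
        simp [hx]
      · rw [indicator_of_notMem (by simpa using hx)]
        push Not at hx
        obtain ⟨i, hi⟩ := hx
        rw [Finset.prod_eq_zero (Finset.mem_univ i) (f := fun i => (s i).indicator 1 (T (x i)))
          (by simp [hi]), mul_zero]
    · intro i
      exact hk.mul ((measurable_one.indicator (hs i)).comp hT)
  rw [key, lintegral_map hF hTm]
  exact lintegral_withDensity_eq_lintegral_mul _ hkm (hF.comp hTm)

section VT
variable {V : ℝ → ℝ} {δ : ℝ}

theorem IsVTransform.dualL (hV : IsVTransform V δ) {u : ℝ} (h0 : 0 ≤ u) (h1 : u < δ) :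
    δ < u + V u ∧ u + V u ≤ 1 ∧ V (u + V u) = V u := by
  have hδ := hV.fulcrum_mem
  obtain ⟨us, hus, h, he, ha⟩ := hV.square u ⟨h0, by linarith [hδ.2]⟩ h1.ne
  rcases h with h | h
  · rw [abs_of_nonneg (by linarith)] at ha
    have : us = u + V u := by linarith
    rw [← this]
    exact ⟨h.2, hus.2, he⟩
  · linarith

theorem IsVTransform.dualR (hV : IsVTransform V δ) {u : ℝ} (h0 : δ < u) (h1 : u ≤ 1) :
    0 ≤ u - V u ∧ u - V u < δ ∧ V (u - V u) = V u := by
  have hδ := hV.fulcrum_mem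
  obtain ⟨us, hus, h, he, ha⟩ := hV.square u ⟨by linarith [hδ.1], h1⟩ h0.ne'
  rcases h with h | h
  · linarith
  · rw [abs_of_nonpos (by linarith)] at ha
    have : us = u - V u := by linarith
    rw [← this]
    exact ⟨hus.1, h.1, he⟩

theorem IsVTransform.pinvL (hV : IsVTransform V δ) {u : ℝ} (h0 : 0 ≤ u) (h1 : u ≤ δ) :
    partialInverse V (V u) = u := by
  have hδ := hV.fulcrum_mem
  refine IsLeast.csInf_eq ⟨⟨⟨h0, by linarith [hδ.2]⟩, rfl⟩, fun x hx => ?_⟩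
  by_contra hlt
  push Not at hlt
  have := hV.strictAntiOn ⟨hx.1.1, by linarith⟩ ⟨h0, h1⟩ hlt
  linarith [hx.2]

theorem IsVTransform.pinvR (hV : IsVTransform V δ) {u : ℝ} (h0 : δ < u) (h1 : u ≤ 1) :
    partialInverse V (V u) = u - V u := by
  obtain ⟨a, b, c⟩ := hV.dualR h0 h1
  rw [← hV.pinvL a b.le, c]

theorem IsVTransform.exL (hV : IsVTransform V δ) {v : ℝ} (hv : v ∈ Icc (0:ℝ) 1) :
    ∃ u ∈ Icc 0 δ, V u = v := by
  have hδ := hV.fulcrum_mem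
  have := intermediate_value_Icc' hδ.1.le
    (hV.contOn.mono (Icc_subset_Icc_right hδ.2.le))
  rw [hV.map_zero, hV.map_fulcrum] at this
  exact this hv

theorem IsVTransform.exR (hV : IsVTransform V δ) {v : ℝ} (hv : v ∈ Icc (0:ℝ) 1) :
    ∃ u ∈ Icc δ 1, V u = v := by
  have hδ := hV.fulcrum_mem
  have := intermediate_value_Icc hδ.2.le
    (hV.contOn.mono (Icc_subset_Icc_left hδ.1.le))
  rw [hV.map_one, hV.map_fulcrum] at this
  exact this hv

theorem IsVTransform.imageL (hV : IsVTransform V δ) : V '' Ioo 0 δ = Ioo 0 1 := by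
  have hδ := hV.fulcrum_mem
  ext v
  constructor
  · rintro ⟨u, hu, rfl⟩
    have h1 := hV.strictAntiOn ⟨le_rfl, hδ.1.le⟩ ⟨hu.1.le, hu.2.le⟩ hu.1
    have h2 := hV.strictAntiOn ⟨hu.1.le, hu.2.le⟩ ⟨hδ.1.le, le_rfl⟩ hu.2
    rw [hV.map_zero] at h1
    rw [hV.map_fulcrum] at h2
    exact ⟨h2, h1⟩
  · intro hv
    obtain ⟨u, hu, rfl⟩ := hV.exL ⟨hv.1.le, hv.2.le⟩
    refine ⟨u, ⟨lt_of_le_of_ne hu.1 ?_, lt_of_le_of_ne hu.2 ?_⟩, rfl⟩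
    · rintro rfl
      exact absurd hv.2 (by simp [hV.map_zero])
    · rintro rfl
      exact absurd hv.1 (by simp [hV.map_fulcrum])

theorem IsVTransform.imageR (hV : IsVTransform V δ) : V '' Ioo δ 1 = Ioo 0 1 := by
  have hδ := hV.fulcrum_mem
  ext v
  constructor
  · rintro ⟨u, hu, rfl⟩
    have h1 := hV.strictMonoOn ⟨le_rfl, hδ.2.le⟩ ⟨hu.1.le, hu.2.le⟩ hu.1
    have h2 := hV.strictMonoOn ⟨hu.1.le, hu.2.le⟩ ⟨hδ.2.le, le_rfl⟩ hu.2
    rw [hV.map_fulcrum] at h1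
    rw [hV.map_one] at h2
    exact ⟨h1, h2⟩
  · intro hv
    obtain ⟨u, hu, rfl⟩ := hV.exR ⟨hv.1.le, hv.2.le⟩
    refine ⟨u, ⟨lt_of_le_of_ne hu.1 ?_, lt_of_le_of_ne hu.2 ?_⟩, rfl⟩
    · rintro rfl
      exact absurd hv.1 (by simp [hV.map_fulcrum])
    · rintro rfl
      exact absurd hv.2 (by simp [hV.map_one])

theorem IsVTransform.measurable_pinv (hV : IsVTransform V δ) :
    Measurable (partialInverse V) := by
  have hanti : Antitone fun v => partialInverse V (max 0 (min 1 v)) := by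
    intro v w hvw
    have hm : max 0 (min 1 v) ≤ max 0 (min 1 w) := by gcongr
    obtain ⟨a, ha, ha'⟩ := hV.exL (v := max 0 (min 1 v)) ⟨by simp, by simp⟩
    obtain ⟨b, hb, hb'⟩ := hV.exL (v := max 0 (min 1 w)) ⟨by simp, by simp⟩
    simp only
    rw [← ha', ← hb', hV.pinvL ha.1 ha.2, hV.pinvL hb.1 hb.2]
    rw [← ha', ← hb'] at hm
    exact (hV.strictAntiOn.le_iff_ge ha hb).1 hm
  have : partialInverse V =
      (Icc (0:ℝ) 1).indicator fun v => partialInverse V (max 0 (min 1 v)) := by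
    ext v
    by_cases hv : v ∈ Icc (0:ℝ) 1
    · rw [indicator_of_mem hv, min_eq_right hv.2, max_eq_right hv.1]
    · rw [indicator_of_notMem hv]
      have : {u | u ∈ Icc (0:ℝ) 1 ∧ V u = v} = ∅ := by
        ext u
        simp only [mem_ofPred_eq, mem_empty_iff_false, iff_false]
        rintro ⟨h, rfl⟩
        exact hv (hV.mapsTo u h)
      rw [partialInverse, this, Real.sInf_empty]
  rw [this]
  exact hanti.measurable.indicator measurableSet_Icc

theorem IsVTransform.diffAt (hV : IsVTransform V δ)
    (hdiff : ∀ u ∈ Set.Icc (0:ℝ) 1, u ≠ δ → DifferentiableWithinAt ℝ V (Set.Icc 0 1) u)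
    {u : ℝ} (hu : u ∈ Ioo (0:ℝ) 1) (hne : u ≠ δ) : HasDerivAt V (deriv V u) u :=
  ((hdiff u ⟨hu.1.le, hu.2.le⟩ hne).differentiableAt (Icc_mem_nhds hu.1 hu.2)).hasDerivAt

theorem IsVTransform.dualL_lt_one (hV : IsVTransform V δ) {u : ℝ} (h0 : 0 < u) (h1 : u < δ) :
    u + V u < 1 := by
  obtain ⟨a, b, c⟩ := hV.dualL h0.le h1
  refine lt_of_le_of_ne b fun h => ?_
  rw [h, hV.map_one] at c
  have := hV.strictAntiOn ⟨le_rfl, hV.fulcrum_mem.1.le⟩ ⟨h0.le, h1.le⟩ h0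
  rw [hV.map_zero] at this
  linarith

theorem IsVTransform.deriv_facts (hV : IsVTransform V δ)
    (hdiff : ∀ u ∈ Set.Icc (0:ℝ) 1, u ≠ δ → DifferentiableWithinAt ℝ V (Set.Icc 0 1) u)
    {a : ℝ} (ha : a ∈ Ioo 0 δ) :
    deriv V a < -1 ∧ deriv V (a + V a) * (1 + deriv V a) = deriv V a := by
  have hδ := hV.fulcrum_mem
  obtain ⟨h1, h2, h3⟩ := hV.dualL ha.1.le ha.2
  have h4 := hV.dualL_lt_one ha.1 ha.2
  have da := hV.diffAt hdiff ⟨ha.1, ha.2.trans hδ.2⟩ ha.2.ne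
  have ds := hV.diffAt hdiff (u := a + V a) ⟨hδ.1.trans h1, h4⟩ h1.ne'
  have dsum : HasDerivAt (fun x => x + V x) (1 + deriv V a) a := (hasDerivAt_id a).add da
  have dcomp : HasDerivAt (fun x => V (x + V x)) (deriv V (a + V a) * (1 + deriv V a)) a :=
    HasDerivAt.comp a ds dsum
  have heq : (fun x => V (x + V x)) =ᶠ[nhds a] V := by
    filter_upwards [Ioo_mem_nhds ha.1 ha.2] with x hx
    exact (hV.dualL hx.1.le hx.2).2.2
  have e := (dcomp.congr_of_eventuallyEq heq.symm).unique da
  refine ⟨?_, e⟩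
  have hanti : AntitoneOn (fun x => x + V x) (Ioo 0 δ) := by
    intro x hx y hy hxy
    obtain ⟨x1, x2, x3⟩ := hV.dualL hx.1.le hx.2
    obtain ⟨y1, y2, y3⟩ := hV.dualL hy.1.le hy.2
    simp only
    rw [← hV.strictMonoOn.le_iff_le ⟨y1.le, y2⟩ ⟨x1.le, x2⟩, x3, y3]
    exact hV.strictAntiOn.antitoneOn ⟨hx.1.le, hx.2.le⟩ ⟨hy.1.le, hy.2.le⟩ hxy
  have hle : derivWithin (fun x => x + V x) (Ioo 0 δ) a ≤ 0 := hanti.derivWithin_nonpos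
  rw [dsum.hasDerivWithinAt.derivWithin (isOpen_Ioo.uniqueDiffWithinAt ha)] at hle
  refine lt_of_le_of_ne (by linarith) fun h => ?_
  rw [h] at e
  norm_num at e

theorem IsVTransform.downProb_left (hV : IsVTransform V δ)
    {a : ℝ} (ha : a ∈ Ioo 0 δ) :
    downProb V δ (V a) = -1 / deriv V a := by
  rw [downProb, hV.pinvL ha.1.le ha.2.le, derivWithin_of_mem_nhds (Icc_mem_nhds ha.1 ha.2)]

theorem IsVTransform.left_facts (hV : IsVTransform V δ)
    (hdiff : ∀ u ∈ Set.Icc (0:ℝ) 1, u ≠ δ → DifferentiableWithinAt ℝ V (Set.Icc 0 1) u)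
    {a : ℝ} (ha : a ∈ Ioo 0 δ) :
    0 < downProb V δ (V a) ∧ downProb V δ (V a) < 1 ∧ |deriv V a| = 1 / downProb V δ (V a) := by
  have h := (hV.deriv_facts hdiff ha).1
  rw [hV.downProb_left ha]
  refine ⟨div_pos_of_neg_of_neg (by norm_num) (by linarith), ?_, ?_⟩
  · rw [div_lt_one_of_neg (by linarith)]; linarith
  · rw [abs_of_neg (by linarith)]; field_simp

theorem IsVTransform.right_facts (hV : IsVTransform V δ)
    (hdiff : ∀ u ∈ Set.Icc (0:ℝ) 1, u ≠ δ → DifferentiableWithinAt ℝ V (Set.Icc 0 1) u)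
    {u : ℝ} (hu : u ∈ Ioo δ 1) :
    0 < downProb V δ (V u) ∧ downProb V δ (V u) < 1 ∧
      |deriv V u| = 1 / (1 - downProb V δ (V u)) := by
  obtain ⟨h1, h2, h3⟩ := hV.dualR hu.1 hu.2.le
  have hV1 : V u ∈ Ioo (0:ℝ) 1 := hV.imageR ▸ mem_image_of_mem V hu
  have ha : u - V u ∈ Ioo 0 δ := by
    refine ⟨lt_of_le_of_ne h1 fun h => ?_, h2⟩
    rw [← h, hV.map_zero] at h3
    linarith [hV1.2]
  obtain ⟨l1, l2, l3⟩ := hV.left_facts hdiff ha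
  obtain ⟨d1, d2⟩ := hV.deriv_facts hdiff ha
  have l4 := hV.downProb_left ha
  rw [h3] at l1 l2 l4 d2
  rw [sub_add_cancel] at d2
  refine ⟨l1, l2, ?_⟩
  have e : deriv V u = 1 / (1 - downProb V δ (V u)) := by
    rw [l4]
    have : deriv V (u - V u) ≠ 0 := by linarith
    have h' : 1 + deriv V (u - V u) ≠ 0 := by linarith
    have : 1 - -1 / deriv V (u - V u) = (1 + deriv V (u - V u)) / deriv V (u - V u) := by
      field_simp; ring
    rw [this, one_div_div, eq_div_iff h', d2]
  rw [e, abs_of_pos]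
  exact one_div_pos.2 (by linarith)

end VT

section Dens
variable {V : ℝ → ℝ} {δ : ℝ}

/-- Extension of `V` from `[0,1]` to `ℝ` by clamping. -/
noncomputable def vExt (V : ℝ → ℝ) (u : ℝ) : ℝ := V (max 0 (min 1 u))

noncomputable def vSet (V : ℝ → ℝ) (δ u : ℝ) : Set ℝ :=
  if u ≤ δ then Icc 0 (downProb V δ (vExt V u)) else Icc (downProb V δ (vExt V u)) 1

noncomputable def vPr (V : ℝ → ℝ) (δ u : ℝ) : ℝ :=
  if u ≤ δ then downProb V δ (vExt V u) else 1 - downProb V δ (vExt V u)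

def vReg (V : ℝ → ℝ) (δ : ℝ) : Set (ℝ × ℝ) :=
  {x | x.1 ∈ Icc (0:ℝ) 1 ∧ x.2 ∈ vSet V δ x.1}

noncomputable def vKer (V : ℝ → ℝ) (δ : ℝ) : ℝ × ℝ → ENNReal :=
  (vReg V δ).indicator fun x => ENNReal.ofReal (1 / vPr V δ x.1)

theorem vExt_eq {u : ℝ} (hu : u ∈ Icc (0:ℝ) 1) : vExt V u = V u := by
  rw [vExt, min_eq_right hu.2, max_eq_right hu.1]

theorem IsVTransform.continuous_vExt (hV : IsVTransform V δ) : Continuous (vExt V) := by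
  refine hV.contOn.comp_continuous (by fun_prop) fun x => ⟨by simp, by simp⟩

theorem measurableSet_vSet (u : ℝ) : MeasurableSet (vSet V δ u) := by
  unfold vSet; split_ifs <;> exact measurableSet_Icc

theorem IsVTransform.measurable_vPr (hV : IsVTransform V δ) (hΔ : Measurable (downProb V δ)) :
    Measurable (vPr V δ) := by
  have hq : Measurable fun u => downProb V δ (vExt V u) := hΔ.comp hV.continuous_vExt.measurable
  exact Measurable.ite measurableSet_Iic hq (hq.const_sub 1)

theorem IsVTransform.measurableSet_graph (hV : IsVTransform V δ)
    (hΔ : Measurable (downProb V δ)) : MeasurableSet {x : ℝ × ℝ | x.2 ∈ vSet V δ x.1} := by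
  have hq : Measurable fun x : ℝ × ℝ => downProb V δ (vExt V x.1) :=
    hΔ.comp (hV.continuous_vExt.measurable.comp measurable_fst)
  have h1 : MeasurableSet {x : ℝ × ℝ | x.1 ≤ δ} := measurableSet_le measurable_fst measurable_const
  have : {x : ℝ × ℝ | x.2 ∈ vSet V δ x.1} =
      ({x : ℝ × ℝ | x.1 ≤ δ} ∩ ({x | 0 ≤ x.2} ∩ {x | x.2 ≤ downProb V δ (vExt V x.1)})) ∪
      ({x : ℝ × ℝ | x.1 ≤ δ}ᶜ ∩ ({x | downProb V δ (vExt V x.1) ≤ x.2} ∩ {x | x.2 ≤ 1})) := by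
    ext x
    by_cases h : x.1 ≤ δ <;> simp [vSet, h]
  rw [this]
  exact (h1.inter ((measurableSet_le measurable_const measurable_snd).inter
    (measurableSet_le measurable_snd hq))).union (h1.compl.inter
    ((measurableSet_le hq measurable_snd).inter (measurableSet_le measurable_snd measurable_const)))

theorem IsVTransform.measurableSet_vReg (hV : IsVTransform V δ)
    (hΔ : Measurable (downProb V δ)) : MeasurableSet (vReg V δ) :=
  (measurable_fst measurableSet_Icc).inter (hV.measurableSet_graph hΔ)

theorem IsVTransform.measurable_vKer (hV : IsVTransform V δ)
    (hΔ : Measurable (downProb V δ)) : Measurable (vKer V δ) :=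
  (((hV.measurable_vPr hΔ).comp measurable_fst).const_div 1).ennreal_ofReal.indicator
    (hV.measurableSet_vReg hΔ)

theorem Icc_ae_split (hδ : δ ∈ Ioo (0:ℝ) 1) :
    (Icc (0:ℝ) 1 : Set ℝ) =ᵐ[volume] (Ioo 0 δ ∪ Ioo δ 1 : Set ℝ) := by
  have h : ∀ a : ℝ, ∀ᵐ x : ℝ, x ≠ a := fun a => by simp [ae_iff]
  filter_upwards [h 0, h δ, h 1] with x h0 h1 h2
  refine propext ⟨fun hx => ?_, fun hx => ?_⟩
  · rcases lt_or_gt_of_ne h1 with h | h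
    · exact Or.inl ⟨lt_of_le_of_ne hx.1 h0.symm, h⟩
    · exact Or.inr ⟨h, lt_of_le_of_ne hx.2 h2⟩
  · rcases hx with hx | hx
    · exact ⟨hx.1.le, (hx.2.trans hδ.2).le⟩
    · exact ⟨(hδ.1.trans hx.1).le, hx.2.le⟩

theorem IsVTransform.oneD (hV : IsVTransform V δ)
    (hdiff : ∀ u ∈ Set.Icc (0:ℝ) 1, u ≠ δ → DifferentiableWithinAt ℝ V (Set.Icc 0 1) u)
    (hΔ : Measurable (downProb V δ)) (F : ℝ × ℝ → ENNReal) (hF : Measurable F) :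
    ∫⁻ x, vKer V δ x * F (vExt V x.1, x.2) =
      ∫⁻ x in (Icc (0:ℝ) 1 ×ˢ Icc (0:ℝ) 1), F x := by
  have hδ := hV.fulcrum_mem
  have hT : Measurable fun x : ℝ × ℝ => (vExt V x.1, x.2) :=
    (hV.continuous_vExt.measurable.comp measurable_fst).prodMk measurable_snd
  have hm : Measurable fun x => vKer V δ x * F (vExt V x.1, x.2) :=
    (hV.measurable_vKer hΔ).mul (hF.comp hT)
  have step1 : ∫⁻ x, vKer V δ x * F (vExt V x.1, x.2) =
      ∫⁻ u in Icc (0:ℝ) 1, ENNReal.ofReal (1 / vPr V δ u) *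
        ∫⁻ z in vSet V δ u, F (vExt V u, z) := by
    rw [Measure.volume_eq_prod, lintegral_prod _ hm.aemeasurable,
      ← lintegral_indicator measurableSet_Icc]
    refine lintegral_congr fun u => ?_
    by_cases hu : u ∈ Icc (0:ℝ) 1
    · rw [indicator_of_mem hu, ← lintegral_indicator (measurableSet_vSet u),
        ← lintegral_const_mul' _ _ ENNReal.ofReal_ne_top]
      refine lintegral_congr fun z => ?_
      by_cases hz : z ∈ vSet V δ u
      · rw [indicator_of_mem hz, vKer, indicator_of_mem (show (u, z) ∈ vReg V δ from ⟨hu, hz⟩)]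
      · rw [indicator_of_notMem hz, vKer, indicator_of_notMem (fun h => hz h.2)]
        simp
    · rw [indicator_of_notMem hu]
      simp only [vKer]
      rw [← lintegral_zero (μ := (volume : Measure ℝ))]
      refine lintegral_congr fun z => ?_
      rw [indicator_of_notMem (fun h => hu h.1), zero_mul]
  rw [step1, setLIntegral_congr (Icc_ae_split hδ), lintegral_union measurableSet_Ioo]
  swap
  · rw [Set.disjoint_left]; rintro x hx hy; exact lt_asymm hx.2 hy.1
  have hL : ∫⁻ u in Ioo 0 δ, ENNReal.ofReal (1 / vPr V δ u) *
        ∫⁻ z in vSet V δ u, F (vExt V u, z) =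
      ∫⁻ v in Ioo (0:ℝ) 1, ∫⁻ z in Icc 0 (downProb V δ v), F (v, z) := by
    rw [← hV.imageL, lintegral_image_eq_lintegral_abs_deriv_mul measurableSet_Ioo (f' := deriv V)]
    · refine setLIntegral_congr_fun measurableSet_Ioo fun u hu => ?_
      have hu' : u ∈ Icc (0:ℝ) 1 := ⟨hu.1.le, (hu.2.trans hδ.2).le⟩
      simp only [vPr, vSet, hu.2.le, if_true, vExt_eq hu', (hV.left_facts hdiff hu).2.2]
    · intro u hu
      exact (hV.diffAt hdiff ⟨hu.1, hu.2.trans hδ.2⟩ hu.2.ne).hasDerivWithinAt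
    · exact hV.strictAntiOn.injOn.mono Ioo_subset_Icc_self
  have hR : ∫⁻ u in Ioo δ 1, ENNReal.ofReal (1 / vPr V δ u) *
        ∫⁻ z in vSet V δ u, F (vExt V u, z) =
      ∫⁻ v in Ioo (0:ℝ) 1, ∫⁻ z in Ioc (downProb V δ v) 1, F (v, z) := by
    rw [← hV.imageR, lintegral_image_eq_lintegral_abs_deriv_mul measurableSet_Ioo (f' := deriv V)]
    · refine setLIntegral_congr_fun measurableSet_Ioo fun u hu => ?_
      have hu' : u ∈ Icc (0:ℝ) 1 := ⟨(hδ.1.trans hu.1).le, hu.2.le⟩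
      simp only [vPr, vSet, not_le.2 hu.1, if_false, vExt_eq hu', (hV.right_facts hdiff hu).2.2]
      rw [setLIntegral_congr Ioc_ae_eq_Icc]
    · intro u hu
      exact (hV.diffAt hdiff ⟨hδ.1.trans hu.1, hu.2⟩ hu.1.ne').hasDerivWithinAt
    · exact hV.strictMonoOn.injOn.mono Ioo_subset_Icc_self
  rw [hL, hR, Measure.volume_eq_prod, ← Measure.prod_restrict, lintegral_prod _ hF.aemeasurable,
    setLIntegral_congr (Ioo_ae_eq_Icc (a := (0:ℝ)) (b := 1)).symm, ← lintegral_add_left]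
  · refine setLIntegral_congr_fun measurableSet_Ioo fun v hv => ?_
    rw [← hV.imageL] at hv
    obtain ⟨u, hu, rfl⟩ := hv
    obtain ⟨h1, h2, -⟩ := hV.left_facts hdiff hu
    rw [← lintegral_union measurableSet_Ioc, Icc_union_Ioc_eq_Icc h1.le h2.le]
    rw [Set.disjoint_left]; rintro x hx hy; exact not_lt.2 hx.2 hy.1
  · have : (fun v => ∫⁻ z in Icc 0 (downProb V δ v), F (v, z)) = fun v => ∫⁻ z,
        ({x : ℝ × ℝ | 0 ≤ x.2} ∩ {x | x.2 ≤ downProb V δ x.1}).indicator F (v, z) := by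
      ext v
      rw [← lintegral_indicator measurableSet_Icc]
      rfl
    rw [this]
    refine Measurable.lintegral_prod_right' (hF.indicator ?_)
    exact (measurableSet_le measurable_const measurable_snd).inter
      (measurableSet_le measurable_snd (hΔ.comp measurable_fst))

theorem IsVTransform.multiD (hV : IsVTransform V δ)
    (hdiff : ∀ u ∈ Set.Icc (0:ℝ) 1, u ≠ δ → DifferentiableWithinAt ℝ V (Set.Icc 0 1) u)
    (hΔ : Measurable (downProb V δ)) {d : ℕ} (F : (Fin d → ℝ) × (Fin d → ℝ) → ENNReal)
    (hF : Measurable F) :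
    ∫⁻ p in ((univ.pi fun _ : Fin d => Icc (0:ℝ) 1) ×ˢ (univ.pi fun _ : Fin d => Icc (0:ℝ) 1)),
        F p =
      ∫⁻ p : (Fin d → ℝ) × (Fin d → ℝ),
        (∏ i, vKer V δ (p.1 i, p.2 i)) * F (fun i => vExt V (p.1 i), p.2) := by
  have hT : Measurable fun x : ℝ × ℝ => (vExt V x.1, x.2) :=
    (hV.continuous_vExt.measurable.comp measurable_fst).prodMk measurable_snd
  have h1 := measurePreserving_arrowProdEquivProdArrow ℝ ℝ (Fin d)
    (fun _ => volume.restrict (Icc (0:ℝ) 1)) (fun _ => volume.restrict (Icc (0:ℝ) 1))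
  have h2 := volume_measurePreserving_arrowProdEquivProdArrow ℝ ℝ (Fin d)
  rw [Measure.volume_eq_prod, ← Measure.prod_restrict, volume_pi, Measure.restrict_pi_pi,
    ← h1.map_eq, lintegral_map_equiv]
  rw [← volume_pi, ← Measure.volume_eq_prod, ← h2.map_eq, lintegral_map_equiv, volume_pi]
  have key := map_pi_withDensity_aux (n := d) (volume : Measure (ℝ × ℝ))
    ((volume.restrict (Icc (0:ℝ) 1)).prod (volume.restrict (Icc (0:ℝ) 1)))
    (vKer V δ) (hV.measurable_vKer hΔ) _ hT ?_
    (fun x => F (MeasurableEquiv.arrowProdEquivProdArrow ℝ ℝ (Fin d) x))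
    (hF.comp (MeasurableEquiv.measurable _))
  · exact key
  · intro s hs
    rw [hV.oneD hdiff hΔ _ (measurable_one.indicator hs), lintegral_indicator_one hs,
      Measure.prod_restrict, Measure.volume_eq_prod]

theorem IsVTransform.multiD' (hV : IsVTransform V δ)
    (hdiff : ∀ u ∈ Set.Icc (0:ℝ) 1, u ≠ δ → DifferentiableWithinAt ℝ V (Set.Icc 0 1) u)
    (hΔ : Measurable (downProb V δ)) {d : ℕ} (F : (Fin d → ℝ) × (Fin d → ℝ) → ENNReal)
    (hF : Measurable F) :
    ∫⁻ p in ((univ.pi fun _ : Fin d => Icc (0:ℝ) 1) ×ˢ (univ.pi fun _ : Fin d => Icc (0:ℝ) 1)),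
        F p =
      ∫⁻ u in (univ.pi fun _ : Fin d => Icc (0:ℝ) 1),
        (∏ i, ENNReal.ofReal (1 / vPr V δ (u i))) *
          ∫⁻ z in univ.pi (fun i => vSet V δ (u i)), F (fun i => vExt V (u i), z) := by
  have hk : Measurable fun p : (Fin d → ℝ) × (Fin d → ℝ) => ∏ i, vKer V δ (p.1 i, p.2 i) := by
    refine Finset.measurable_fun_prod _ fun i _ => (hV.measurable_vKer hΔ).comp ?_
    fun_prop
  have hVm := hV.continuous_vExt.measurable
  have hF' : Measurable fun p : (Fin d → ℝ) × (Fin d → ℝ) => F (fun i => vExt V (p.1 i), p.2) := by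
    refine hF.comp (Measurable.prodMk (measurable_pi_lambda _ fun i => hVm.comp ?_) measurable_snd)
    fun_prop
  have hc : MeasurableSet (univ.pi fun _ : Fin d => Icc (0:ℝ) 1) :=
    MeasurableSet.univ_pi fun _ => measurableSet_Icc
  have hm : Measurable fun p : (Fin d → ℝ) × (Fin d → ℝ) =>
      (∏ i, vKer V δ (p.1 i, p.2 i)) * F (fun i => vExt V (p.1 i), p.2) := hk.mul hF'
  rw [hV.multiD hdiff hΔ F hF, Measure.volume_eq_prod, lintegral_prod _ hm.aemeasurable,
      ← lintegral_indicator hc]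
  refine lintegral_congr fun u => ?_
  by_cases hu : u ∈ univ.pi fun _ : Fin d => Icc (0:ℝ) 1
  · have hs : MeasurableSet (univ.pi (fun i => vSet V δ (u i))) :=
      MeasurableSet.univ_pi fun _ => measurableSet_vSet _
    rw [indicator_of_mem hu, ← lintegral_indicator hs, ← lintegral_const_mul']
    · refine lintegral_congr fun z => ?_
      by_cases hz : z ∈ univ.pi (fun i => vSet V δ (u i))
      · rw [indicator_of_mem hz]
        congr 1
        refine Finset.prod_congr rfl fun i _ => ?_
        rw [vKer, indicator_of_mem]
        exact ⟨hu i trivial, hz i trivial⟩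
      · rw [indicator_of_notMem hz, mul_zero]
        simp only [mem_pi, mem_univ, true_implies, not_forall] at hz
        obtain ⟨i, hi⟩ := hz
        rw [Finset.prod_eq_zero (Finset.mem_univ i), zero_mul]
        rw [vKer, indicator_of_notMem fun h => hi h.2]
    · exact ENNReal.prod_ne_top fun i _ => ENNReal.ofReal_ne_top
  · rw [indicator_of_notMem hu, ← lintegral_zero (μ := (volume : Measure (Fin d → ℝ)))]
    refine lintegral_congr fun z => ?_
    simp only [mem_pi, mem_univ, true_implies, not_forall] at hu
    obtain ⟨i, hi⟩ := hu
    rw [Finset.prod_eq_zero (Finset.mem_univ i), zero_mul]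
    rw [vKer, indicator_of_notMem fun h => hi h.1]

theorem IsVTransform.stochInv_eq (hV : IsVTransform V δ) {u z : ℝ} (hu : u ∈ Icc (0:ℝ) 1)
    (hz : z ∈ vSet V δ u) (hne : z ≠ downProb V δ (vExt V u)) :
    stochInv V δ (vExt V u) z = u := by
  unfold vSet at hz
  rw [vExt_eq hu] at *
  unfold stochInv
  split_ifs at hz with h
  · rw [if_pos hz.2, hV.pinvL hu.1 h]
  · rw [if_neg (not_le.2 (lt_of_le_of_ne hz.1 hne.symm)), hV.pinvR (not_le.1 h) hu.2]
    ring

theorem IsVTransform.measurable_stochInv (hV : IsVTransform V δ)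
    (hΔ : Measurable (downProb V δ)) :
    Measurable fun p : ℝ × ℝ => stochInv V δ p.1 p.2 := by
  have hp : Measurable fun p : ℝ × ℝ => partialInverse V p.1 := hV.measurable_pinv.comp measurable_fst
  exact Measurable.ite (measurableSet_le measurable_snd (hΔ.comp measurable_fst)) hp
    (measurable_fst.add hp)

theorem IsVTransform.vPr_pos (hV : IsVTransform V δ)
    (hdiff : ∀ u ∈ Set.Icc (0:ℝ) 1, u ≠ δ → DifferentiableWithinAt ℝ V (Set.Icc 0 1) u)
    {u : ℝ} (hu : u ∈ Ioo 0 δ ∪ Ioo δ 1) : 0 < vPr V δ u := by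
  have hδ := hV.fulcrum_mem
  rcases hu with hu | hu
  · rw [vPr, if_pos hu.2.le, vExt_eq ⟨hu.1.le, (hu.2.trans hδ.2).le⟩]
    exact (hV.left_facts hdiff hu).1
  · rw [vPr, if_neg (not_le.2 hu.1), vExt_eq ⟨(hδ.1.trans hu.1).le, hu.2.le⟩]
    linarith [(hV.right_facts hdiff hu).2.1]

end Dens

/-- Theorem 2 of the paper, general case: if `(V_i, W_i)` are
pairs of uniform variables with `V_i ⫫ W_i` for each `i` and the joint law of
`(V, W)` has density `c_{V,W}`, then `U` with `U_i = 𝒱⁻¹(V_i, W_i)` has the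
joint density (9) of the paper with respect to Lebesgue measure on `[0,1]^d`. -/
theorem stochInv_density_general {Ω : Type*} [MeasurableSpace Ω]
    (μ : Measure Ω) [IsProbabilityMeasure μ] (d : ℕ)
    (V : ℝ → ℝ) (δ : ℝ) (hV : IsVTransform V δ)
    (hdiff : ∀ u ∈ Set.Icc (0:ℝ) 1, u ≠ δ →
      DifferentiableWithinAt ℝ V (Set.Icc 0 1) u)
    (hΔmeas : Measurable (downProb V δ))
    (Vvec Wvec : Ω → Fin d → ℝ)
    (hVvec : Measurable Vvec) (hWvec : Measurable Wvec)
    (hVmarg : ∀ i, Measure.map (fun ω => Vvec ω i) μ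
      = volume.restrict (Set.Icc 0 1))
    (hWmarg : ∀ i, Measure.map (fun ω => Wvec ω i) μ
      = volume.restrict (Set.Icc 0 1))
    (hpair : ∀ i, IndepFun (fun ω => Vvec ω i) (fun ω => Wvec ω i) μ)
    (cVW : (Fin d → ℝ) → (Fin d → ℝ) → ℝ)
    (hcVW : Measurable fun p : (Fin d → ℝ) × (Fin d → ℝ) => cVW p.1 p.2)
    (hcVWnonneg : ∀ x y, 0 ≤ cVW x y)
    (hdens : Measure.map (fun ω => (Vvec ω, Wvec ω)) μ
      = volume.withDensity (fun p => ENNReal.ofReal (cVW p.1 p.2))) :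
    Measure.map (fun ω i => stochInv V δ (Vvec ω i) (Wvec ω i)) μ =
      (volume.restrict (Set.univ.pi fun _ : Fin d => Set.Icc (0:ℝ) 1)).withDensity
        (fun u => ENNReal.ofReal
          ((∫ z in Set.univ.pi (fun i => if u i ≤ δ
                then Set.Icc (0:ℝ) (downProb V δ (V (u i)))
                else Set.Icc (downProb V δ (V (u i))) 1),
              cVW (fun i => V (u i)) z) /
            ∏ i, (if u i ≤ δ then downProb V δ (V (u i))
                  else 1 - downProb V δ (V (u i))))) := by
  have hc : MeasurableSet (univ.pi fun _ : Fin d => Icc (0:ℝ) 1) :=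
    MeasurableSet.univ_pi fun _ => measurableSet_Icc
  have hcof : Measurable fun p : (Fin d → ℝ) × (Fin d → ℝ) => ENNReal.ofReal (cVW p.1 p.2) :=
    hcVW.ennreal_ofReal
  have hS : Measurable fun (p : (Fin d → ℝ) × (Fin d → ℝ)) i => stochInv V δ (p.1 i) (p.2 i) := by
    refine measurable_pi_lambda _ fun i => (hV.measurable_stochInv hΔmeas).comp
      (g := fun p : ℝ × ℝ => stochInv V δ p.1 p.2)
      (f := fun p : (Fin d → ℝ) × (Fin d → ℝ) => (p.1 i, p.2 i)) ?_
    fun_prop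
  -- the joint law lives on the cube
  have hmem : ∀ᵐ ω ∂μ, (Vvec ω, Wvec ω) ∈
      (univ.pi fun _ : Fin d => Icc (0:ℝ) 1) ×ˢ (univ.pi fun _ : Fin d => Icc (0:ℝ) 1) := by
    have hv : ∀ i, ∀ᵐ ω ∂μ, Vvec ω i ∈ Icc (0:ℝ) 1 := fun i => by
      refine ae_of_ae_map (p := fun x => x ∈ Icc (0:ℝ) 1) (f := fun ω => Vvec ω i)
        (by fun_prop) ?_
      rw [hVmarg i]
      exact ae_restrict_mem measurableSet_Icc
    have hw : ∀ i, ∀ᵐ ω ∂μ, Wvec ω i ∈ Icc (0:ℝ) 1 := fun i => by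
      refine ae_of_ae_map (p := fun x => x ∈ Icc (0:ℝ) 1) (f := fun ω => Wvec ω i)
        (by fun_prop) ?_
      rw [hWmarg i]
      exact ae_restrict_mem measurableSet_Icc
    filter_upwards [ae_all_iff.2 hv, ae_all_iff.2 hw] with ω h1 h2
    exact ⟨fun i _ => h1 i, fun i _ => h2 i⟩
  have hVW : Measurable fun ω => (Vvec ω, Wvec ω) := hVvec.prodMk hWvec
  have hlaw : Measure.map (fun ω => (Vvec ω, Wvec ω)) μ =
      (volume.restrict ((univ.pi fun _ : Fin d => Icc (0:ℝ) 1) ×ˢ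
        (univ.pi fun _ : Fin d => Icc (0:ℝ) 1))).withDensity
          (fun p => ENNReal.ofReal (cVW p.1 p.2)) := by
    rw [← restrict_withDensity (hc.prod hc), ← hdens, Measure.restrict_eq_self_of_ae_mem]
    exact (ae_map_iff hVW.aemeasurable (p := fun x => x ∈
      (univ.pi fun _ : Fin d => Icc (0:ℝ) 1) ×ˢ (univ.pi fun _ : Fin d => Icc (0:ℝ) 1))
      (hc.prod hc)).2 hmem
  -- finiteness
  have hfin : ∀ᵐ u ∂(volume.restrict (univ.pi fun _ : Fin d => Icc (0:ℝ) 1)),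
      (∏ i, ENNReal.ofReal (1 / vPr V δ (u i))) *
          ∫⁻ z in univ.pi (fun i => vSet V δ (u i)),
            ENNReal.ofReal (cVW (fun i => vExt V (u i)) z) < ⊤ := by
    have htot := hV.multiD' hdiff hΔmeas _ hcof
    have h1 : ∫⁻ p in ((univ.pi fun _ : Fin d => Icc (0:ℝ) 1) ×ˢ
        (univ.pi fun _ : Fin d => Icc (0:ℝ) 1)), ENNReal.ofReal (cVW p.1 p.2) = 1 := by
      have : Measure.map (fun ω => (Vvec ω, Wvec ω)) μ univ = 1 := by
        rw [Measure.map_apply hVW MeasurableSet.univ]; simp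
      rwa [hlaw, withDensity_apply _ MeasurableSet.univ, Measure.restrict_univ] at this
    refine ae_lt_top' ?_ (by rw [← htot, h1]; exact ENNReal.one_ne_top)
    have hVm := hV.continuous_vExt.measurable
    refine Measurable.aemeasurable (Measurable.mul ?_ ?_)
    · exact Finset.measurable_fun_prod _ fun i _ =>
        (((hV.measurable_vPr hΔmeas).comp (measurable_pi_apply i)).const_div 1).ennreal_ofReal
    · have hs : MeasurableSet {p : (Fin d → ℝ) × (Fin d → ℝ) |
          ∀ i, p.2 i ∈ vSet V δ (p.1 i)} := by
        have : {p : (Fin d → ℝ) × (Fin d → ℝ) | ∀ i, p.2 i ∈ vSet V δ (p.1 i)} =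
            ⋂ i, (fun p : (Fin d → ℝ) × (Fin d → ℝ) => (p.1 i, p.2 i)) ⁻¹'
              {x : ℝ × ℝ | x.2 ∈ vSet V δ x.1} := by
          ext p; simp
        rw [this]
        refine MeasurableSet.iInter fun i => ?_
        refine measurableSet_preimage ?_ (hV.measurableSet_graph hΔmeas)
        fun_prop
      have hc' : Measurable fun p : (Fin d → ℝ) × (Fin d → ℝ) =>
          ENNReal.ofReal (cVW (fun i => vExt V (p.1 i)) p.2) := by
        refine hcof.comp (f := fun p : (Fin d → ℝ) × (Fin d → ℝ) =>
          ((fun i => vExt V (p.1 i)), p.2)) ?_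
        exact (measurable_pi_lambda _ fun i => hVm.comp
          ((measurable_pi_apply i).comp measurable_fst)).prodMk measurable_snd
      have := (hc'.indicator hs).lintegral_prod_right' (ν := (volume : Measure (Fin d → ℝ)))
      refine (congrArg (fun f : (Fin d → ℝ) → ENNReal => Measurable f) (funext fun u => ?_)).mpr this
      rw [← lintegral_indicator (MeasurableSet.univ_pi fun _ => measurableSet_vSet _)]
      refine lintegral_congr fun z => ?_
      by_cases hz : ∀ i, z i ∈ vSet V δ (u i)
      · have h1 : z ∈ univ.pi (fun i => vSet V δ (u i)) := fun i _ => hz i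
        have h2 : (u, z) ∈ {p : (Fin d → ℝ) × (Fin d → ℝ) | ∀ i, p.2 i ∈ vSet V δ (p.1 i)} := hz
        exact (indicator_of_mem h1 _).trans (indicator_of_mem h2
          (fun p => ENNReal.ofReal (cVW (fun i => vExt V (p.1 i)) p.2))).symm
      · have h1 : z ∉ univ.pi (fun i => vSet V δ (u i)) := fun h => hz fun i => h i trivial
        have h2 : (u, z) ∉ {p : (Fin d → ℝ) × (Fin d → ℝ) | ∀ i, p.2 i ∈ vSet V δ (p.1 i)} := hz
        exact (indicator_of_notMem h1 _).trans (indicator_of_notMem h2 _).symm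
  have hae : ∀ᵐ u ∂(volume.restrict (univ.pi fun _ : Fin d => Icc (0:ℝ) 1)),
      ∀ i, u i ∈ Ioo 0 δ ∪ Ioo δ 1 := by
    rw [volume_pi, Measure.restrict_pi_pi, ae_all_iff]
    intro i
    refine (Measure.tendsto_eval_ae_ae (i := i)).eventually (p := fun x => x ∈ Ioo 0 δ ∪ Ioo δ 1) ?_
    rw [Measure.restrict_congr_set (Icc_ae_split hV.fulcrum_mem)]
    exact ae_restrict_mem (measurableSet_Ioo.union measurableSet_Ioo)
  ext A hA
  have hmap : Measure.map (fun ω i => stochInv V δ (Vvec ω i) (Wvec ω i)) μ =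
      (Measure.map (fun ω => (Vvec ω, Wvec ω)) μ).map
        (fun p i => stochInv V δ (p.1 i) (p.2 i)) := by
    rw [Measure.map_map hS hVW]; rfl
  rw [hmap, Measure.map_apply hS hA, hlaw, withDensity_apply _ (hS hA),
    ← lintegral_indicator (hS hA), hV.multiD' hdiff hΔmeas _ (hcof.indicator (hS hA)),
    withDensity_apply _ hA, ← lintegral_indicator hA]
  refine lintegral_congr_ae ?_
  filter_upwards [hfin, hae, ae_restrict_mem hc] with u hu1 hu2 hu3
  have hsm : MeasurableSet (univ.pi (fun i => vSet V δ (u i))) :=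
    MeasurableSet.univ_pi fun _ => measurableSet_vSet _
  -- remove the stochastic inverse
  have e1 : ∫⁻ z in univ.pi (fun i => vSet V δ (u i)),
      ((fun (p : (Fin d → ℝ) × (Fin d → ℝ)) i => stochInv V δ (p.1 i) (p.2 i)) ⁻¹' A).indicator
        (fun p => ENNReal.ofReal (cVW p.1 p.2)) (fun i => vExt V (u i), z) =
      ∫⁻ z in univ.pi (fun i => vSet V δ (u i)),
        A.indicator (fun _ => ENNReal.ofReal (cVW (fun i => vExt V (u i)) z)) u := by
    have hne : ∀ᵐ z : Fin d → ℝ, ∀ i, z i ≠ downProb V δ (vExt V (u i)) := by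
      rw [ae_all_iff, volume_pi]
      intro i
      refine (Measure.tendsto_eval_ae_ae (i := i)).eventually
        (p := fun x => x ≠ downProb V δ (vExt V (u i))) ?_
      simp [ae_iff]
    refine lintegral_congr_ae ?_
    filter_upwards [ae_restrict_of_ae hne, ae_restrict_mem hsm] with z hz1 hz2
    have : (fun i => stochInv V δ (vExt V (u i)) (z i)) = u := by
      ext i
      exact hV.stochInv_eq (hu3 i trivial) (hz2 i trivial) (hz1 i)
    by_cases huA : u ∈ A
    · rw [indicator_of_mem huA, indicator_of_mem]
      simpa [this] using huA
    · rw [indicator_of_notMem huA, indicator_of_notMem]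
      simpa [this] using huA
  rw [e1]
  by_cases huA : u ∈ A
  swap
  · simp [huA]
  simp only [indicator_of_mem huA]
  have hv : ∀ i, vExt V (u i) = V (u i) := fun i => vExt_eq (hu3 i trivial)
  have hset : (univ.pi (fun i => if u i ≤ δ
                then Set.Icc (0:ℝ) (downProb V δ (V (u i)))
                else Set.Icc (downProb V δ (V (u i))) 1)) = univ.pi (fun i => vSet V δ (u i)) := by
    simp only [vSet, hv]
  have hprod : (∏ i, (if u i ≤ δ then downProb V δ (V (u i))
                  else 1 - downProb V δ (V (u i)))) = ∏ i, vPr V δ (u i) := by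
    simp only [vPr, hv]
  rw [hset, hprod]
  simp only [hv] at hu1 ⊢
  have hpos : ∀ i, 0 < vPr V δ (u i) := fun i => hV.vPr_pos hdiff (hu2 i)
  rw [← ENNReal.ofReal_prod_of_nonneg (fun i _ => (one_div_pos.2 (hpos i)).le)] at hu1 ⊢
  have hP : 0 < ∏ i, 1 / vPr V δ (u i) := Finset.prod_pos fun i _ => one_div_pos.2 (hpos i)
  have hlt : ∫⁻ z in univ.pi (fun i => vSet V δ (u i)),
      ENNReal.ofReal (cVW (fun i => V (u i)) z) ≠ ⊤ := by
    intro h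
    rw [h, ENNReal.mul_top (by simpa using hP)] at hu1
    exact lt_irrefl _ hu1
  have hmz : Measurable fun z => cVW (fun i => V (u i)) z := hcVW.comp measurable_prodMk_left
  rw [integral_eq_lintegral_of_nonneg_ae (Filter.Eventually.of_forall fun z => hcVWnonneg _ z)
    hmz.aestronglyMeasurable, div_eq_mul_inv, mul_comm,
    ENNReal.ofReal_mul ENNReal.toReal_nonneg, ENNReal.ofReal_toReal hlt]
  simp
end

section
/- Let 𝒱 be a v-transform with fulcrum δ, differentiable at every point of [0,1] except δ, with conditional down probability Δ(v) = −1/𝒱′(𝒱⁻¹(v)), and set δ(u) = Δ(𝒱(u)) and p_{δ,u}(x) = x if u ≤ δ, 1−x if u > δ. Then for every u ∈ [0,1] \ {δ}: if u ≤ δ then p_{δ,u}(δ(u)) = δ(u) = −1/𝒱′(u), and if u > δ then p_{δ,u}(δ(u)) = 1 − δ(u) = 1/𝒱′(u); that is, p_{δ,u}(δ(u)) = (−1)^{1{u ≤ δ}}/𝒱′(u). -/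
open Set MeasureTheory ProbabilityTheory

/-- The function `p_{δ,u}(x)`: equal to `x` if `u ≤ δ` and to `1 - x` if `u > δ`. -/
noncomputable def pfun (δ u x : ℝ) : ℝ := if u ≤ δ then x else 1 - x

theorem partialInverse_left {V : ℝ → ℝ} {δ : ℝ} (hV : IsVTransform V δ) {x : ℝ}
    (hx : x ∈ Set.Icc (0:ℝ) δ) : partialInverse V (V x) = x := by
  have h1 := hV.fulcrum_mem.2
  refine IsLeast.csInf_eq ⟨⟨⟨hx.1, by linarith [hx.2]⟩, rfl⟩, ?_⟩
  rintro y ⟨hy, hyV⟩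
  by_contra! hlt
  have := hV.strictAntiOn ⟨hy.1, by linarith [hx.2]⟩ hx hlt
  linarith

theorem dual_left {V : ℝ → ℝ} {δ : ℝ} (hV : IsVTransform V δ) {x : ℝ}
    (hx : x ∈ Set.Icc (0:ℝ) δ) : x + V x ∈ Set.Icc δ 1 ∧ V (x + V x) = V x := by
  have h1 := hV.fulcrum_mem.2
  rcases eq_or_ne x δ with rfl | hne
  · simp [hV.map_fulcrum, h1.le]
  · obtain ⟨y, hy, hc, hVy, ha⟩ := hV.square x ⟨hx.1, by linarith [hx.2]⟩ hne
    have hc' : δ < y := by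
      rcases hc with h | h
      · exact h.2
      · linarith [hx.2]
    rw [abs_of_nonneg (by linarith [hx.2])] at ha
    have : x + V x = y := by linarith
    rw [this]
    exact ⟨⟨hc'.le, hy.2⟩, hVy⟩

theorem left_deriv {V : ℝ → ℝ} {δ : ℝ} (hV : IsVTransform V δ)
    (hdiff : ∀ u ∈ Set.Icc (0:ℝ) 1, u ≠ δ →
      DifferentiableWithinAt ℝ V (Set.Icc 0 1) u) {x : ℝ}
    (hx0 : 0 ≤ x) (hx : x < δ) :
    HasDerivWithinAt V (derivWithin V (Set.Icc 0 1) x) (Set.Icc 0 δ) x :=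
  ((hdiff x ⟨hx0, by linarith [hV.fulcrum_mem.2]⟩ hx.ne).hasDerivWithinAt).mono
    (Set.Icc_subset_Icc le_rfl hV.fulcrum_mem.2.le)

/-- equation (A.1) of the paper: writing `δ(u) = Δ(𝒱(u))`, for
`u ∈ [0,1] \ {δ}` one has `p_{δ,u}(δ(u)) = -1/𝒱′(u)` if `u ≤ δ` and
`p_{δ,u}(δ(u)) = 1/𝒱′(u)` if `u > δ`. -/
theorem pfun_downProb_eq_inv_deriv (V : ℝ → ℝ) (δ : ℝ) (hV : IsVTransform V δ)
    (hdiff : ∀ u ∈ Set.Icc (0:ℝ) 1, u ≠ δ →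
      DifferentiableWithinAt ℝ V (Set.Icc 0 1) u) :
    ∀ u ∈ Set.Icc (0:ℝ) 1, u ≠ δ →
      (u ≤ δ →
        pfun δ u (downProb V δ (V u)) = downProb V δ (V u) ∧
        downProb V δ (V u) = -1 / derivWithin V (Set.Icc 0 1) u) ∧
      (δ < u →
        pfun δ u (downProb V δ (V u)) = 1 - downProb V δ (V u) ∧
        1 - downProb V δ (V u) = 1 / derivWithin V (Set.Icc 0 1) u) := by
  intro u hu hne
  have h0 := hV.fulcrum_mem.1
  have h1 := hV.fulcrum_mem.2
  have hU : UniqueDiffOn ℝ (Set.Icc 0 δ) := uniqueDiffOn_Icc h0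
  refine ⟨fun hle => ⟨by simp [pfun, hle], ?_⟩, fun hlt => ⟨by simp [pfun, not_le.2 hlt], ?_⟩⟩
  · have hl := lt_of_le_of_ne hle hne
    rw [downProb, partialInverse_left hV ⟨hu.1, hle⟩,
      (left_deriv hV hdiff hu.1 hl).derivWithin (hU u ⟨hu.1, hle⟩)]
  · obtain ⟨x, hx, hc, hVx, ha⟩ := hV.square u hu hne
    have hxl : x < δ := by
      rcases hc with h | h
      · linarith [h.1]
      · exact h.1
    have hxm : x ∈ Set.Icc 0 δ := ⟨hx.1, hxl.le⟩
    rw [abs_of_nonpos (by linarith)] at ha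
    have hux : x + V x = u := by linarith
    have hA := left_deriv hV hdiff hx.1 hxl
    rw [downProb, ← hVx, partialInverse_left hV hxm, hA.derivWithin (hU x hxm)]
    set a := derivWithin V (Set.Icc 0 1) x
    have hB := (hdiff u hu hne).hasDerivWithinAt
    set b := derivWithin V (Set.Icc 0 1) u
    have hF : HasDerivWithinAt (fun y => y + V y) (1 + a) (Set.Icc 0 δ) x :=
      (hasDerivWithinAt_id x _).add hA
    have hanti : AntitoneOn (fun y => y + V y) (Set.Icc 0 δ) := by
      intro y hy z hz hyz
      obtain ⟨m1, e1⟩ := dual_left hV hy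
      obtain ⟨m2, e2⟩ := dual_left hV hz
      have := hV.strictAntiOn.antitoneOn hy hz hyz
      exact (hV.strictMonoOn.le_iff_le m2 m1).1 (by rw [e1, e2]; exact this)
    have hneg : 1 + a ≤ 0 := by
      rw [← hF.derivWithin (hU x hxm)]
      exact hanti.derivWithin_nonpos
    rw [← hux] at hB
    have hmaps : Set.MapsTo (fun y => y + V y) (Set.Icc 0 δ) (Set.Icc 0 1) := fun y hy =>
      ⟨h0.le.trans (dual_left hV hy).1.1, (dual_left hV hy).1.2⟩
    have hcomp := HasDerivWithinAt.comp x hB hF hmaps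
    have hA' := hcomp.congr (f₁ := V) (fun y hy => (dual_left hV hy).2.symm)
      (dual_left hV hxm).2.symm
    have key : b * (1 + a) = a := (hU x hxm).eq_deriv _ hA' hA
    have ha0 : a ≠ 0 := by intro h; linarith
    have hb0 : b ≠ 0 := by
      intro h
      rw [h, zero_mul] at key
      exact ha0 key.symm
    field_simp
    linarith
end

section
/- Let 𝒱 be a v-transform with fulcrum δ, differentiable at every point of [0,1] except δ. For u > δ let u* = u − 𝒱(u) be the dual point of u. Then the derivatives at dual points satisfy 𝒱′(u) = 𝒱′(u*)·(1 − 𝒱′(u)), or equivalently 𝒱′(u) = 𝒱′(u*)/(1 + 𝒱′(u*)). -/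
open Set MeasureTheory ProbabilityTheory

/-- the derivative of a v-transform at a point `u > δ` and at its
dual point `u* = u - 𝒱(u)` satisfy `𝒱′(u) = 𝒱′(u*)(1 - 𝒱′(u))`, equivalently
`𝒱′(u) = 𝒱′(u*)/(1 + 𝒱′(u*))`. -/
theorem deriv_at_dual_points (V : ℝ → ℝ) (δ : ℝ) (hV : IsVTransform V δ)
    (hdiff : ∀ u ∈ Set.Icc (0:ℝ) 1, u ≠ δ →
      DifferentiableWithinAt ℝ V (Set.Icc 0 1) u) :
    ∀ u ∈ Set.Icc (0:ℝ) 1, δ < u →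
      derivWithin V (Set.Icc 0 1) u =
        derivWithin V (Set.Icc 0 1) (u - V u) * (1 - derivWithin V (Set.Icc 0 1) u) ∧
      derivWithin V (Set.Icc 0 1) u =
        derivWithin V (Set.Icc 0 1) (u - V u) /
          (1 + derivWithin V (Set.Icc 0 1) (u - V u)) := by
  intro u hu hδu
  have hδ := hV.fulcrum_mem
  have key : ∀ x ∈ Set.Ioc δ 1, x - V x ∈ Set.Icc (0:ℝ) 1 ∧ x - V x < δ ∧
      V (x - V x) = V x := by
    intro x hx
    obtain ⟨us, hus, hside, hVus, habs⟩ :=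
      hV.square x ⟨hδ.1.le.trans hx.1.le, hx.2⟩ hx.1.ne'
    have h1 : us < δ := by
      rcases hside with h | h
      · exact absurd h.1 (not_lt.2 hx.1.le)
      · exact h.1
    have h2 : us = x - V x := by
      rw [abs_of_neg (by linarith [hx.1])] at habs
      linarith
    rw [← h2]
    exact ⟨hus, h1, hVus⟩
  have hsub : Set.Ioc δ 1 ⊆ Set.Icc (0:ℝ) 1 := fun x hx => ⟨hδ.1.le.trans hx.1.le, hx.2⟩
  have hmem : u ∈ Set.Ioc δ 1 := ⟨hδu, hu.2⟩
  obtain ⟨k1, k2, k3⟩ := key u hmem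
  have ha := (hdiff u hu hδu.ne').hasDerivWithinAt
  have hb := (hdiff (u - V u) k1 k2.ne).hasDerivWithinAt
  set a := derivWithin V (Set.Icc 0 1) u
  set b := derivWithin V (Set.Icc 0 1) (u - V u)
  have ha' : HasDerivWithinAt V a (Set.Ioc δ 1) u := ha.mono hsub
  have hg : HasDerivWithinAt (fun x => x - V x) (1 - a) (Set.Ioc δ 1) u :=
    (hasDerivWithinAt_id u _).sub ha'
  have hc : HasDerivWithinAt (V ∘ fun x => x - V x) (b * (1 - a)) (Set.Ioc δ 1) u :=
    HasDerivWithinAt.comp u hb hg (fun x hx => (key x hx).1)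
  have hc' : HasDerivWithinAt V (b * (1 - a)) (Set.Ioc δ 1) u :=
    hc.congr (fun x hx => (key x hx).2.2.symm) k3.symm
  have e : a = b * (1 - a) :=
    (uniqueDiffOn_Ioc δ 1 u hmem).eq_deriv _ ha' hc'
  refine ⟨e, ?_⟩
  have hne : 1 + b ≠ 0 := by
    intro h
    have hb1 : b = -1 := by linarith
    rw [hb1] at e
    linarith
  rw [eq_div_iff hne]
  linarith
end

section
/- Let T₁, T₂ : [0,∞) → ℝ be continuous and strictly increasing with T₁(0) = T₂(0) and T₁([0,∞)) ⊆ T₂([0,∞)), let μ_T ∈ ℝ, and define the volatility proxy transformation T : ℝ → ℝ by T(x) = T₁(μ_T − x) for x ≤ μ_T and T(x) = T₂(x − μ_T) for x > μ_T. Let X be a real random variable whose distribution function F_X is continuous and strictly increasing with values in (0,1), let F_{T(X)}(y) = P(T(X) ≤ y), and let 𝒱(u) = F_{T(X)}(T(F_X⁻¹(u))) be the associated v-transform. Then the profile function g_T = T₂⁻¹ ∘ T₁ satisfies, for every x ≥ 0, g_T(x) = F_X⁻¹( F_X(μ_T − x) + 𝒱(F_X(μ_T − x)) ) − μ_T. 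-/
open Set MeasureTheory ProbabilityTheory

/-- Proposition 3 of McNeil (2020), as quoted in the paper: the
profile function `g_T = T₂⁻¹ ∘ T₁` of a volatility proxy transformation satisfies
`g_T(x) = F_X⁻¹(F_X(μ_T - x) + 𝒱(F_X(μ_T - x))) - μ_T` for all `x ≥ 0`, where
`𝒱(u) = F_{T(X)}(T(F_X⁻¹(u)))` is the associated v-transform. -/
theorem profile_function_formula {Ω : Type*} [MeasurableSpace Ω]
    (μ : Measure Ω) [IsProbabilityMeasure μ]
    (X : Ω → ℝ) (hX : Measurable X)
    (FX : ℝ → ℝ) (hFXdef : ∀ x, FX x = (μ {ω | X ω ≤ x}).toReal)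
    (hFXcont : Continuous FX) (hFXmono : StrictMono FX)
    (hFXrange : ∀ x, FX x ∈ Set.Ioo (0:ℝ) 1)
    (FXinv : ℝ → ℝ) (hFXinv : ∀ x, FXinv (FX x) = x)
    (hFXinv' : ∀ u ∈ Set.Ioo (0:ℝ) 1, FX (FXinv u) = u)
    (T1 T2 : ℝ → ℝ)
    (hT1cont : ContinuousOn T1 (Set.Ici 0)) (hT1mono : StrictMonoOn T1 (Set.Ici 0))
    (hT2cont : ContinuousOn T2 (Set.Ici 0)) (hT2mono : StrictMonoOn T2 (Set.Ici 0))
    (hT10 : T1 0 = T2 0)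
    (hrange : ∀ x : ℝ, 0 ≤ x → ∃ y : ℝ, 0 ≤ y ∧ T2 y = T1 x)
    (T2inv : ℝ → ℝ) (hT2inv : ∀ x : ℝ, 0 ≤ x → T2inv (T2 x) = x)
    (μT : ℝ) (T : ℝ → ℝ)
    (hTdef : ∀ x : ℝ, (x ≤ μT → T x = T1 (μT - x)) ∧ (μT < x → T x = T2 (x - μT)))
    (FTX : ℝ → ℝ) (hFTX : ∀ y, FTX y = (μ {ω | T (X ω) ≤ y}).toReal) :
    ∀ x : ℝ, 0 ≤ x →
      T2inv (T1 x) =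
        FXinv (FX (μT - x) + FTX (T (FXinv (FX (μT - x))))) - μT := by
  intro x hx
  obtain ⟨y, hy, hyx⟩ := hrange x hx
  have hTx : T (FXinv (FX (μT - x))) = T1 x := by
    rw [hFXinv, (hTdef _).1 (by linarith)]
    congr 1; ring
  have hset : {ω | X ω ≤ μT + y} = {ω | X ω < μT - x} ∪ {ω | T (X ω) ≤ T1 x} := by
    ext ω
    simp only [Set.mem_setOf_eq, Set.mem_union]
    rcases le_or_gt (X ω) μT with h | h
    · rw [(hTdef _).1 h, hT1mono.le_iff_le (by simpa using h) (by simpa using hx)]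
      constructor
      · intro _
        rcases lt_or_ge (X ω) (μT - x) with h' | h'
        · exact Or.inl h'
        · right; linarith
      · intro _; linarith
    · rw [(hTdef _).2 h, ← hyx, hT2mono.le_iff_le (by simpa using h.le) (by simpa using hy)]
      constructor
      · intro _; right; linarith
      · rintro (h' | h') <;> linarith
  have hdisj : Disjoint {ω | X ω < μT - x} {ω | T (X ω) ≤ T1 x} := by
    rw [Set.disjoint_left]
    intro ω h1 h2
    simp only [Set.mem_setOf_eq] at h1 h2
    have h : X ω ≤ μT := by linarith
    rw [(hTdef _).1 h, hT1mono.le_iff_le (by simpa using h) (by simpa using hx)] at h2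
    linarith
  have hlt : (μ {ω | X ω < μT - x}).toReal = FX (μT - x) := by
    apply le_antisymm
    · rw [hFXdef]
      exact ENNReal.toReal_mono (measure_ne_top _ _)
        (measure_mono fun ω (h : X ω < μT - x) => h.le)
    · have ht : Filter.Tendsto FX (nhdsWithin (μT - x) (Set.Iio (μT - x)))
          (nhds (FX (μT - x))) := hFXcont.continuousAt.tendsto.mono_left nhdsWithin_le_nhds
      refine le_of_tendsto ht ?_
      filter_upwards [self_mem_nhdsWithin] with z hz
      rw [hFXdef]
      exact ENNReal.toReal_mono (measure_ne_top _ _)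
        (measure_mono fun ω (h : X ω ≤ z) => lt_of_le_of_lt h hz)
  have hsum : FX (μT - x) + FTX (T1 x) = FX (μT + y) := by
    rw [hFXdef (μT + y), hset, measure_union' hdisj (measurableSet_lt hX measurable_const),
      ENNReal.toReal_add (measure_ne_top _ _) (measure_ne_top _ _), hlt, hFTX]
  rw [hTx, hsum, hFXinv, ← hyx, hT2inv y hy]
  ring
end
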